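/- arXiv:1909.08937 — 6 statements merged into one kernel-verified Lean document; each statement's English description precedes it below -/
import Mathlib

section
/- If a 5-dimensional slice S of S₊³ is second-order cone representable, then S is the image of Q × Q under a linear map; that is, there exists a linear map f : ℝ³ × ℝ³ → S³ with S = f(Q × Q). -/
/-!
A `5`-dimensional slice is `S = {A ⪰ 0 : tr (A B) = 0}` for a nonzero symmetric matrix `B`, and it
spans the hyperplane `B^⊥` of the symmetric matrices. After an orthogonal change of coordinates
`B` is diagonal with increasing entries. If `B` were semidefinite, all matrices in `S` would share a
zero row in these coordinates and could not span `B^⊥` (`false_of_semidefinite`). So `B` is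
indefinite.

If `B` has rank two, it is a product of two linear forms, and in suitable coordinates
`S = {G ⪰ 0 : G 0 2 = 0}`. Taking a Schur complement splits such a `G` into two positive
semidefinite `2 × 2` blocks, each of which is a point of the Lorentz cone `Q`
(`image_of_degenerate`).

If `B` has rank three, `S` is not second-order cone representable (`not_isSOCR_of_nondegenerate`).
The conic of `B` has infinitely many points `p k`, any three of them linearly independent, and
`x k = p k (p k)ᵀ` lies in `S`. Suppose the `x k` lift to points `y k` of `Qᵐ ∩ W`. In each of the
`m` factors, an infinite index set has an infinite subset along which the rays of the lifts are
all equal or pairwise different. Hence there is an infinite index set that works for all factors at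
once. For distinct `a, b, c` in it, every component of `y a + y b` is either interior to `Q` (by
strict convexity) or on the same ray as that of `y c`; hence `y a + y b - δ • y c` is in `Qᵐ ∩ W`
for small `δ > 0`, and `x a + x b - δ • x c` is in `S` (`IsSOCR.exists_add_sub_smul_mem`). But this
matrix is negative on a vector orthogonal to `p a` and `p b` and not to `p c`.
-/

open Matrix

noncomputable section

/-- The three-dimensional Lorentz cone `Q = {x ∈ ℝ³ : x₃ ≥ √(x₁² + x₂²)}`. -/
def lorentzCone : Set (Fin 3 → ℝ) :=
  {x | Real.sqrt (x 0 ^ 2 + x 1 ^ 2) ≤ x 2}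

/-- The `m`-fold Cartesian power `Qᵐ ⊆ (ℝ³)ᵐ` of the Lorentz cone. -/
def lorentzPow (m : ℕ) : Set (Fin m → Fin 3 → ℝ) :=
  {x | ∀ i, x i ∈ lorentzCone}

/-- The cone of real symmetric positive semidefinite `k × k` matrices. -/
def psdCone (k : ℕ) : Set (Matrix (Fin k) (Fin k) ℝ) :=
  {A | A.PosSemidef}

/-- For `B ∈ Sᵏ`, the slice `S_B = {A ∈ S₊ᵏ : tr(AB) = 0}` of the psd cone
orthogonal to `B` w.r.t. the trace scalar product. -/
def sliceOrth (k : ℕ) (B : Matrix (Fin k) (Fin k) ℝ) : Set (Matrix (Fin k) (Fin k) ℝ) :=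
  {A | A.PosSemidef ∧ Matrix.trace (A * B) = 0}

/-- `S` is a slice of `S₊ᵏ`: the intersection of the psd cone with a linear
subspace of the space of symmetric matrices. -/
def IsSlice (k : ℕ) (S : Set (Matrix (Fin k) (Fin k) ℝ)) : Prop :=
  ∃ L : Submodule ℝ (Matrix (Fin k) (Fin k) ℝ),
    (∀ A ∈ L, A.IsSymm) ∧ S = psdCone k ∩ (L : Set (Matrix (Fin k) (Fin k) ℝ))

/-- A set `S` in a real vector space is second-order cone representable (socr)
if it is the image under a linear map of the intersection of `Qᵐ` with a
linear subspace of `(ℝ³)ᵐ`, for some positive integer `m`. -/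
def IsSOCR {V : Type*} [AddCommGroup V] [Module ℝ V] (S : Set V) : Prop :=
  ∃ m : ℕ, 0 < m ∧ ∃ W : Submodule ℝ (Fin m → Fin 3 → ℝ),
    ∃ f : (Fin m → Fin 3 → ℝ) →ₗ[ℝ] V,
      S = f '' (lorentzPow m ∩ (W : Set (Fin m → Fin 3 → ℝ)))

/-- A symmetric matrix is indefinite if it is neither positive semidefinite
nor negative semidefinite. -/
def Indefinite (k : ℕ) (B : Matrix (Fin k) (Fin k) ℝ) : Prop :=
  ¬ B.PosSemidef ∧ ¬ (-B).PosSemidef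

open Topology

/-! ### The obstruction to second-order cone representability -/

theorem mem_lorentzCone_iff (x : Fin 3 → ℝ) :
    x ∈ lorentzCone ↔ 0 ≤ x 2 ∧ x 0 ^ 2 + x 1 ^ 2 ≤ x 2 ^ 2 :=
  Real.sqrt_le_iff

/-- The section of the ray `ℝ₊ x` at height `1`. For the zero vector, division by zero gives `0`,
which is thereby separated from the sections of all nonzero rays of the Lorentz cone. -/
def raySection (x : Fin 3 → ℝ) : Fin 3 → ℝ := fun i => x i / x 2

theorem eq_smul_raySection {x : Fin 3 → ℝ} (hx : x ∈ lorentzCone) (i : Fin 3) :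
    x i = x 2 * raySection x i := by
  rw [mem_lorentzCone_iff] at hx
  unfold raySection
  rcases hx.1.eq_or_lt with h | h
  · have h0 : x 0 = 0 := by nlinarith [sq_nonneg (x 0), sq_nonneg (x 1)]
    have h1 : x 1 = 0 := by nlinarith [sq_nonneg (x 0), sq_nonneg (x 1)]
    fin_cases i <;> simp [h0, h1, ← h]
  · field_simp

theorem raySection_sq_le {x : Fin 3 → ℝ} (hx : x ∈ lorentzCone) :
    raySection x 0 ^ 2 + raySection x 1 ^ 2 ≤ 1 := by
  by_cases h : x 2 = 0
  · simp [raySection, h]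
  · simp only [raySection, div_pow]
    rw [← add_div, div_le_one (by positivity)]
    exact ((mem_lorentzCone_iff x).1 hx).2

theorem eventually_mem_of_same_ray {x y z : Fin 3 → ℝ} (hx : x ∈ lorentzCone)
    (hy : y ∈ lorentzCone) (hz : z ∈ lorentzCone) (hxz : raySection x = raySection z)
    (hyz : raySection y = raySection z) :
    ∀ᶠ δ in 𝓝[>] (0 : ℝ), x + y - δ • z ∈ lorentzCone := by
  have hx' := fun i => eq_smul_raySection hx i
  have hy' := fun i => eq_smul_raySection hy i
  have hz' := fun i => eq_smul_raySection hz i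
  rw [hxz] at hx'
  rw [hyz] at hy'
  have hx0 := ((mem_lorentzCone_iff x).1 hx).1
  have hy0 := ((mem_lorentzCone_iff y).1 hy).1
  have hz0 := ((mem_lorentzCone_iff z).1 hz).1
  have key : ∀ᶠ δ in 𝓝[>] (0 : ℝ), 0 ≤ x 2 + y 2 - δ * z 2 := by
    rcases hz0.eq_or_lt with h | h
    · filter_upwards with δ
      rw [← h]; linarith
    · -- `z ≠ 0`, so its ray section has last coordinate `1`; hence `x ≠ 0` as well
      have hx2 : 0 < x 2 := by
        rcases hx0.eq_or_lt with h' | h'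
        · have : raySection x 2 = raySection z 2 := by rw [hxz]
          simp [raySection, ← h', h.ne'] at this
        · exact h'
      have hc : Filter.Tendsto (fun δ : ℝ => x 2 + y 2 - δ * z 2) (𝓝[>] 0)
          (𝓝 (x 2 + y 2 - 0 * z 2)) :=
        (Continuous.tendsto (by fun_prop) _).mono_left nhdsWithin_le_nhds
      have h0 : 0 < x 2 + y 2 - 0 * z 2 := by linarith
      exact (hc.eventually_const_lt h0).mono fun δ h => h.le
  have hg := raySection_sq_le hz
  filter_upwards [key] with δ hδ
  rw [mem_lorentzCone_iff]
  simp only [Pi.sub_apply, Pi.add_apply, Pi.smul_apply, smul_eq_mul]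
  refine ⟨hδ, ?_⟩
  rw [hx' 0, hx' 1, hy' 0, hy' 1, hz' 0, hz' 1]
  nlinarith [mul_le_mul_of_nonneg_left hg (sq_nonneg (x 2 + y 2 - δ * z 2))]

/-- The Lorentz cone is strictly convex: the sum of two vectors on different rays is an interior
point, from which a small multiple of any vector may be subtracted. -/
theorem eventually_mem_of_ne_ray {x y : Fin 3 → ℝ} (z : Fin 3 → ℝ) (hx : x ∈ lorentzCone)
    (hy : y ∈ lorentzCone) (hxy : raySection x ≠ raySection y)
    (hx2 : x 2 ≠ 0) (hy2 : y 2 ≠ 0) :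
    ∀ᶠ δ in 𝓝[>] (0 : ℝ), x + y - δ • z ∈ lorentzCone := by
  have hx0 := eq_smul_raySection hx 0
  have hxx1 := eq_smul_raySection hx 1
  have hy0 := eq_smul_raySection hy 0
  have hyy1 := eq_smul_raySection hy 1
  have hp : 0 < x 2 := lt_of_le_of_ne ((mem_lorentzCone_iff x).1 hx).1 hx2.symm
  have hq : 0 < y 2 := lt_of_le_of_ne ((mem_lorentzCone_iff y).1 hy).1 hy2.symm
  have hne : 0 < (raySection x 0 - raySection y 0) ^ 2 + (raySection x 1 - raySection y 1) ^ 2 := by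
    by_contra hcon
    have e0 : raySection x 0 - raySection y 0 = 0 := by
      nlinarith [sq_nonneg (raySection x 0 - raySection y 0),
        sq_nonneg (raySection x 1 - raySection y 1)]
    have e1 : raySection x 1 - raySection y 1 = 0 := by
      nlinarith [sq_nonneg (raySection x 0 - raySection y 0),
        sq_nonneg (raySection x 1 - raySection y 1)]
    apply hxy
    funext i
    fin_cases i
    · exact sub_eq_zero.1 e0
    · exact sub_eq_zero.1 e1
    · simp [raySection, hx2, hy2]
  have hu : (x 0 + y 0) ^ 2 + (x 1 + y 1) ^ 2 < (x 2 + y 2) ^ 2 := by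
    have ga := raySection_sq_le hx
    have gb := raySection_sq_le hy
    rw [hx0, hxx1, hy0, hyy1]
    generalize raySection x 0 = a at *
    generalize raySection x 1 = b at *
    generalize raySection y 0 = c at *
    generalize raySection y 1 = d at *
    have hin : a * c + b * d < 1 := by nlinarith
    nlinarith [mul_lt_mul_of_pos_left hin (mul_pos hp hq),
      mul_le_mul_of_nonneg_left ga (sq_nonneg (x 2)),
      mul_le_mul_of_nonneg_left gb (sq_nonneg (y 2))]
  have c1 : Filter.Tendsto (fun δ : ℝ => x 2 + y 2 - δ * z 2) (𝓝[>] 0)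
      (𝓝 (x 2 + y 2 - 0 * z 2)) :=
    (Continuous.tendsto (by fun_prop) _).mono_left nhdsWithin_le_nhds
  have c2 : Filter.Tendsto (fun δ : ℝ => (x 2 + y 2 - δ * z 2) ^ 2
      - ((x 0 + y 0 - δ * z 0) ^ 2 + (x 1 + y 1 - δ * z 1) ^ 2)) (𝓝[>] 0)
      (𝓝 ((x 2 + y 2 - 0 * z 2) ^ 2
      - ((x 0 + y 0 - 0 * z 0) ^ 2 + (x 1 + y 1 - 0 * z 1) ^ 2))) :=
    (Continuous.tendsto (f := fun δ : ℝ => (x 2 + y 2 - δ * z 2) ^ 2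
      - ((x 0 + y 0 - δ * z 0) ^ 2 + (x 1 + y 1 - δ * z 1) ^ 2))
      (by fun_prop) 0).mono_left nhdsWithin_le_nhds
  have p1 : 0 < x 2 + y 2 - 0 * z 2 := by linarith
  have p2 : 0 < (x 2 + y 2 - 0 * z 2) ^ 2
      - ((x 0 + y 0 - 0 * z 0) ^ 2 + (x 1 + y 1 - 0 * z 1) ^ 2) := by
    simp only [zero_mul, sub_zero]
    linarith
  filter_upwards [c1.eventually_const_lt p1, c2.eventually_const_lt p2] with δ k1 k2
  rw [mem_lorentzCone_iff]
  simp only [Pi.sub_apply, Pi.add_apply, Pi.smul_apply, smul_eq_mul]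
  exact ⟨k1.le, by linarith⟩

/-- Either infinitely many `y k` lie on one ray, or infinitely many lie on pairwise different
rays. -/
theorem exists_infinite_subset_one (y : ℕ → Fin 3 → ℝ) (hy : ∀ k, y k ∈ lorentzCone)
    (T : Set ℕ) (hT : T.Infinite) :
    ∃ T' ⊆ T, T'.Infinite ∧ ∀ a ∈ T', ∀ b ∈ T', ∀ c ∈ T', a ≠ b →
      ∀ᶠ δ in 𝓝[>] (0 : ℝ), y a + y b - δ • y c ∈ lorentzCone := by
  by_cases hfin : ((fun k => raySection (y k)) '' T).Finite
  · obtain ⟨r, hr⟩ : ∃ r, (T ∩ (fun k => raySection (y k)) ⁻¹' {r}).Infinite := by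
      by_contra! hcon
      exact hT (Set.Finite.of_finite_fibers _ hfin fun r _ => hcon r)
    refine ⟨_, Set.inter_subset_left, hr, fun a ha b hb c hc _ => ?_⟩
    exact eventually_mem_of_same_ray (hy a) (hy b) (hy c) (ha.2.trans hc.2.symm)
      (hb.2.trans hc.2.symm)
  · obtain ⟨T₁, hT₁, hbij⟩ := Set.SurjOn.exists_bijOn_subset
      (Set.surjOn_image (fun k => raySection (y k)) T)
    have hT₁inf : T₁.Infinite := fun h => hfin (hbij.image_eq ▸ h.image _)
    -- at most one member of the family vanishes, as ray sections are distinct along `T₁`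
    have hzero : {k ∈ T₁ | y k 2 = 0}.Finite := by
      refine Set.Subsingleton.finite fun a ha b hb => hbij.injOn ha.1 hb.1 ?_
      funext i
      simp [raySection, ha.2, hb.2]
    refine ⟨T₁ \ {k ∈ T₁ | y k 2 = 0}, Set.sdiff_subset.trans hT₁, hT₁inf.sdiff hzero,
      fun a ha b hb c _ hab => ?_⟩
    exact eventually_mem_of_ne_ray (y c) (hy a) (hy b)
      (fun h => hab (hbij.injOn ha.1 hb.1 h)) (fun h => ha.2 ⟨ha.1, h⟩) (fun h => hb.2 ⟨hb.1, h⟩)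

theorem exists_infinite_subset {m : ℕ} (y : ℕ → Fin m → Fin 3 → ℝ)
    (hy : ∀ k, y k ∈ lorentzPow m) (s : Finset (Fin m)) :
    ∃ T : Set ℕ, T.Infinite ∧ ∀ i ∈ s, ∀ a ∈ T, ∀ b ∈ T, ∀ c ∈ T, a ≠ b →
      ∀ᶠ δ in 𝓝[>] (0 : ℝ), y a i + y b i - δ • y c i ∈ lorentzCone := by
  induction s using Finset.induction_on with
  | empty => exact ⟨Set.univ, Set.infinite_univ, by simp⟩
  | insert j s hj ih =>
    obtain ⟨T, hT, h⟩ := ih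
    obtain ⟨T', hsub, hT', h'⟩ :=
      exists_infinite_subset_one (fun k => y k j) (fun k => hy k j) T hT
    refine ⟨T', hT', fun i hi a ha b hb c hc hab => ?_⟩
    rcases Finset.mem_insert.1 hi with rfl | hi
    · exact h' a ha b hb c hc hab
    · exact h i hi a (hsub ha) b (hsub hb) c (hsub hc) hab

/-- The obstruction to second-order cone representability: the points `x k` are lifted to `Qᵐ`,
where suitable lifts of `x a` and `x b` together dominate a positive multiple of the lift of
`x c`. -/
theorem IsSOCR.exists_add_sub_smul_mem {V : Type*} [AddCommGroup V] [Module ℝ V] {S : Set V}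
    (hS : IsSOCR S) (x : ℕ → V) (hx : ∀ k, x k ∈ S) :
    ∃ a b c : ℕ, a ≠ c ∧ b ≠ c ∧ ∃ δ : ℝ, 0 < δ ∧ x a + x b - δ • x c ∈ S := by
  obtain ⟨m, -, W, f, rfl⟩ := hS
  choose y hy hfy using hx
  obtain ⟨T, hT, h⟩ := exists_infinite_subset y (fun k => (hy k).1) Finset.univ
  -- only three indices in `T` are needed
  obtain ⟨F, hF, hcard⟩ := hT.exists_subset_card_eq 3
  obtain ⟨a, b, c, hab, hac, hbc, rfl⟩ := Finset.card_eq_three.1 hcard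
  have ha : a ∈ T := hF (by simp)
  have hb : b ∈ T := hF (by simp)
  have hc : c ∈ T := hF (by simp)
  have hev : ∀ᶠ δ in 𝓝[>] (0 : ℝ), ∀ i, y a i + y b i - δ • y c i ∈ lorentzCone :=
    Filter.eventually_all.2 fun i => h i (Finset.mem_univ i) a ha b hb c hc hab
  obtain ⟨δ, hδ, hpos⟩ := (hev.and self_mem_nhdsWithin).exists
  refine ⟨a, b, c, hac, hbc, δ, hpos, y a + y b - δ • y c, ⟨hδ, ?_⟩, ?_⟩
  · exact W.sub_mem (W.add_mem (hy a).2 (hy b).2) (W.smul_mem _ (hy c).2)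
  · simp [hfy]

/-! ### Forms of rank two and three -/

theorem quadratic_nonneg {p q r : ℝ} (hp : 0 ≤ p) (hr : 0 ≤ r) (h : q ^ 2 ≤ p * r) (a b : ℝ) :
    0 ≤ p * a ^ 2 + 2 * q * a * b + r * b ^ 2 := by
  rcases hp.eq_or_lt with hp0 | hp0
  · have hq : q = 0 := by
      rw [← hp0] at h
      nlinarith [sq_nonneg q]
    rw [← hp0, hq]
    nlinarith [mul_nonneg hr (sq_nonneg b)]
  · have : 0 ≤ p * (p * a ^ 2 + 2 * q * a * b + r * b ^ 2) := by
      nlinarith [sq_nonneg (p * a + q * b), mul_nonneg (sub_nonneg.2 h) (sq_nonneg b)]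
    exact nonneg_of_mul_nonneg_right this hp0

/-- The sum of two symmetric `2 × 2` blocks, in rows and columns `{0, 1}` and `{1, 2}`. A block
`!![x₂ + x₀, x₁; x₁, x₂ - x₀]` is positive semidefinite exactly when `x` is in the Lorentz cone. -/
def blockSum : ((Fin 3 → ℝ) × (Fin 3 → ℝ)) →ₗ[ℝ] Matrix (Fin 3) (Fin 3) ℝ where
  toFun p := !![p.1 2 + p.1 0, p.1 1, 0;
    p.1 1, p.1 2 - p.1 0 + p.2 2 + p.2 0, p.2 1;
    0, p.2 1, p.2 2 - p.2 0]
  map_add' p q := by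
    ext i j
    fin_cases i <;> fin_cases j <;> simp <;> ring
  map_smul' c p := by
    ext i j
    fin_cases i <;> fin_cases j <;> simp <;> ring

theorem blockSum_apply (p : (Fin 3 → ℝ) × (Fin 3 → ℝ)) :
    blockSum p = !![p.1 2 + p.1 0, p.1 1, 0;
      p.1 1, p.1 2 - p.1 0 + p.2 2 + p.2 0, p.2 1;
      0, p.2 1, p.2 2 - p.2 0] := rfl

theorem blockSum_posSemidef {p : (Fin 3 → ℝ) × (Fin 3 → ℝ)} (h1 : p.1 ∈ lorentzCone)
    (h2 : p.2 ∈ lorentzCone) : (blockSum p).PosSemidef := by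
  rw [mem_lorentzCone_iff] at h1 h2
  refine Matrix.PosSemidef.of_dotProduct_mulVec_nonneg ?_ ?_
  · ext i j
    fin_cases i <;> fin_cases j <;> simp [blockSum_apply]
  · intro v
    have q1 := quadratic_nonneg (p := p.1 2 + p.1 0) (q := p.1 1) (r := p.1 2 - p.1 0)
      (by nlinarith [sq_nonneg (p.1 1)]) (by nlinarith [sq_nonneg (p.1 1)]) (by nlinarith)
      (v 0) (v 1)
    have q2 := quadratic_nonneg (p := p.2 2 + p.2 0) (q := p.2 1) (r := p.2 2 - p.2 0)
      (by nlinarith [sq_nonneg (p.2 1)]) (by nlinarith [sq_nonneg (p.2 1)]) (by nlinarith)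
      (v 1) (v 2)
    simp [blockSum_apply, dotProduct, Matrix.mulVec, Fin.sum_univ_three]
    nlinarith

/-- A positive semidefinite matrix whose sparsity graph is the path `0 - 1 - 2` splits into
positive semidefinite blocks on the edges of the path. -/
theorem exists_blockSum_eq {G : Matrix (Fin 3) (Fin 3) ℝ} (hG : G.PosSemidef) (h : G 0 2 = 0) :
    ∃ p : (Fin 3 → ℝ) × (Fin 3 → ℝ), p.1 ∈ lorentzCone ∧ p.2 ∈ lorentzCone ∧ blockSum p = G := by
  have hs : ∀ i j, G j i = G i j := fun i j => by simpa using hG.isHermitian.apply i j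
  have h20 : G 2 0 = 0 := by rw [hs 0 2, h]
  have d0 : 0 ≤ G 0 0 := hG.diag_nonneg
  have d2 : 0 ≤ G 2 2 := hG.diag_nonneg
  have m01 : 0 ≤ G 0 0 * G 1 1 - G 0 1 ^ 2 := by
    have := (hG.submatrix ![0, 1]).det_nonneg
    rw [Matrix.det_fin_two] at this
    simp [hs 0 1] at this
    nlinarith
  have m12 : 0 ≤ G 1 1 * G 2 2 - G 1 2 ^ 2 := by
    have := (hG.submatrix ![1, 2]).det_nonneg
    rw [Matrix.det_fin_two] at this
    simp [hs 1 2] at this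
    nlinarith
  have d1 : 0 ≤ G 1 1 := hG.diag_nonneg
  have hdet := hG.det_nonneg
  rw [Matrix.det_fin_three, hs 0 1, hs 1 2, h, h20] at hdet
  -- `G 1 1 - s` is the Schur complement of `G 0 0`; if `G 0 0 = 0`, then `G 0 1 = 0` and `s = 0` works
  obtain ⟨s, hs0, hs1, hs2⟩ : ∃ s, 0 ≤ G 1 1 - s ∧ G 0 0 * s = G 0 1 ^ 2 ∧ 0 ≤ s ∧
      G 1 2 ^ 2 ≤ (G 1 1 - s) * G 2 2 := by
    rcases d0.eq_or_lt with h0 | h0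
    · refine ⟨0, by linarith, ?_, le_rfl, by linarith⟩
      rw [← h0] at m01 ⊢
      nlinarith [sq_nonneg (G 0 1)]
    · refine ⟨G 0 1 ^ 2 / G 0 0, ?_, by field_simp, by positivity, ?_⟩
      · rw [sub_nonneg, div_le_iff₀ h0]
        linarith
      · have : G 0 0 * G 1 2 ^ 2 ≤ G 0 0 * ((G 1 1 - G 0 1 ^ 2 / G 0 0) * G 2 2) := by
          have e : G 0 0 * ((G 1 1 - G 0 1 ^ 2 / G 0 0) * G 2 2)
              = (G 0 0 * G 1 1 - G 0 1 ^ 2) * G 2 2 := by field_simp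
          rw [e]
          nlinarith
        exact le_of_mul_le_mul_left this h0
  refine ⟨(![(G 0 0 - s) / 2, G 0 1, (G 0 0 + s) / 2],
    ![(G 1 1 - s - G 2 2) / 2, G 1 2, (G 1 1 - s + G 2 2) / 2]), ?_, ?_, ?_⟩
  · rw [mem_lorentzCone_iff]
    simp
    constructor
    · linarith
    · nlinarith
  · rw [mem_lorentzCone_iff]
    simp
    constructor
    · linarith
    · nlinarith
  · rw [blockSum_apply]
    ext i j
    fin_cases i <;> fin_cases j <;> simp [h, h20, hs 0 1, hs 1 2] <;> ring

/-- The slice orthogonal to an indefinite form of rank two, which is a product of two linear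
forms; in suitable coordinates these are `x₀` and `x₂`. -/
theorem image_of_degenerate {S : Set (Matrix (Fin 3) (Fin 3) ℝ)} (P R : Matrix (Fin 3) (Fin 3) ℝ)
    (hRP : R * P = 1)
    (hS : ∀ A, A ∈ S ↔ A.PosSemidef ∧ (Pᵀ * A * P) 0 2 = 0) :
    ∃ f : ((Fin 3 → ℝ) × (Fin 3 → ℝ)) →ₗ[ℝ] Matrix (Fin 3) (Fin 3) ℝ,
      S = f '' {p | p.1 ∈ lorentzCone ∧ p.2 ∈ lorentzCone} := by
  have hPR : P * R = 1 := mul_eq_one_comm.1 hRP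
  have hRPt : Pᵀ * Rᵀ = 1 := by rw [← Matrix.transpose_mul, hRP, Matrix.transpose_one]
  have hPRt : Rᵀ * Pᵀ = 1 := by rw [← Matrix.transpose_mul, hPR, Matrix.transpose_one]
  refine ⟨(LinearMap.mulRight ℝ R ∘ₗ LinearMap.mulLeft ℝ Rᵀ) ∘ₗ blockSum, ?_⟩
  ext A
  rw [hS]
  constructor
  · rintro ⟨hA, h⟩
    have hG : (Pᵀ * A * P).PosSemidef := by simpa using hA.conjTranspose_mul_mul_same P
    obtain ⟨p, h1, h2, hp⟩ := exists_blockSum_eq hG h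
    refine ⟨p, ⟨h1, h2⟩, ?_⟩
    calc Rᵀ * blockSum p * R = (Rᵀ * Pᵀ) * A * (P * R) := by rw [hp]; noncomm_ring
      _ = A := by rw [hPR, hPRt]; simp
  · rintro ⟨p, ⟨h1, h2⟩, rfl⟩
    have hb := blockSum_posSemidef h1 h2
    refine ⟨by simpa using hb.conjTranspose_mul_mul_same R, ?_⟩
    have e : Pᵀ * (Rᵀ * blockSum p * R) * P = blockSum p := by
      calc _ = (Pᵀ * Rᵀ) * blockSum p * (R * P) := by noncomm_ring
        _ = _ := by rw [hRP, hRPt]; simp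
    change (Pᵀ * (Rᵀ * blockSum p * R) * P) 0 2 = 0
    rw [e, blockSum_apply]
    simp

/-- Points `(1 - k², 2k, 1 + k²)` of the conic `x₀² + x₁² = x₂²`. -/
def conicPoint (k : ℕ) : Fin 3 → ℝ := ![1 - (k : ℝ) ^ 2, 2 * k, 1 + (k : ℝ) ^ 2]

/-- The slice orthogonal to a nondegenerate indefinite form contains the rank one matrices of
infinitely many points of a conic, any three of which are linearly independent; so no matrix
`x a + x b - δ • x c` formed from them is positive semidefinite. -/
theorem not_isSOCR_of_nondegenerate {S : Set (Matrix (Fin 3) (Fin 3) ℝ)}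
    (P R : Matrix (Fin 3) (Fin 3) ℝ) (hRP : R * P = 1)
    (hS : ∀ A, A ∈ S ↔ A.PosSemidef ∧
      (Pᵀ * A * P) 0 0 + (Pᵀ * A * P) 1 1 - (Pᵀ * A * P) 2 2 = 0) : ¬ IsSOCR S := by
  intro hsocr
  have hRPt : Pᵀ * Rᵀ = 1 := by rw [← Matrix.transpose_mul, hRP, Matrix.transpose_one]
  have e : ∀ M : Matrix (Fin 3) (Fin 3) ℝ, Pᵀ * (Rᵀ * M * R) * P = M := fun M => by
    calc _ = (Pᵀ * Rᵀ) * M * (R * P) := by noncomm_ring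
      _ = _ := by rw [hRP, hRPt]; simp
  obtain ⟨a, b, c, hac, hbc, δ, hδ, hmem⟩ := hsocr.exists_add_sub_smul_mem
    (fun k => Rᵀ * Matrix.vecMulVec (conicPoint k) (conicPoint k) * R) (by
      intro k
      rw [hS]
      constructor
      · have := Matrix.posSemidef_vecMulVec_self_star (conicPoint k)
        simpa using this.conjTranspose_mul_mul_same R
      · rw [e]
        simp [Matrix.vecMulVec_apply, conicPoint]
        ring)
  have hpsd := ((hS _).1 hmem).1.conjTranspose_mul_mul_same P
  have e2 : Pᴴ * (Rᵀ * Matrix.vecMulVec (conicPoint a) (conicPoint a) * R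
      + Rᵀ * Matrix.vecMulVec (conicPoint b) (conicPoint b) * R
      - δ • (Rᵀ * Matrix.vecMulVec (conicPoint c) (conicPoint c) * R)) * P
      = Matrix.vecMulVec (conicPoint a) (conicPoint a)
      + Matrix.vecMulVec (conicPoint b) (conicPoint b)
      - δ • Matrix.vecMulVec (conicPoint c) (conicPoint c) := by
    rw [Matrix.conjTranspose_eq_transpose_of_trivial]
    simp only [Matrix.mul_add, Matrix.mul_sub, Matrix.add_mul, Matrix.sub_mul, Matrix.mul_smul,
      Matrix.smul_mul, e]
  rw [e2] at hpsd
  -- `z` satisfies `z ⬝ᵥ conicPoint t = (t - a) (t - b)`, so it is orthogonal to the points at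
  -- `a` and `b` but not to the one at `c`
  set z : Fin 3 → ℝ := ![((a : ℝ) * b - 1) / 2, -((a : ℝ) + b) / 2, ((a : ℝ) * b + 1) / 2] with hz
  have hq := hpsd.dotProduct_mulVec_nonneg z
  have hval : star z ⬝ᵥ ((Matrix.vecMulVec (conicPoint a) (conicPoint a)
      + Matrix.vecMulVec (conicPoint b) (conicPoint b)
      - δ • Matrix.vecMulVec (conicPoint c) (conicPoint c)) *ᵥ z)
      = - δ * (((c : ℝ) - a) * (c - b)) ^ 2 := by
    simp [Matrix.mulVec, dotProduct, Fin.sum_univ_three, conicPoint, hz]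
    ring
  rw [hval] at hq
  have h1 : (c : ℝ) - a ≠ 0 := sub_ne_zero.2 (by exact_mod_cast hac.symm)
  have h2 : (c : ℝ) - b ≠ 0 := sub_ne_zero.2 (by exact_mod_cast hbc.symm)
  have : 0 < (((c : ℝ) - a) * (c - b)) ^ 2 := by positivity
  nlinarith

/-! ### Hyperplanes of symmetric matrices -/

/-- The symmetric `3 × 3` matrix whose upper triangular entries are the given six numbers. -/
def symMat : (Fin 6 → ℝ) →ₗ[ℝ] Matrix (Fin 3) (Fin 3) ℝ where
  toFun x := !![x 0, x 1, x 2; x 1, x 3, x 4; x 2, x 4, x 5]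
  map_add' x y := by
    ext i j
    fin_cases i <;> fin_cases j <;> simp
  map_smul' c x := by
    ext i j
    fin_cases i <;> fin_cases j <;> simp

theorem symMat_apply (x : Fin 6 → ℝ) :
    symMat x = !![x 0, x 1, x 2; x 1, x 3, x 4; x 2, x 4, x 5] := rfl

theorem symMat_injective : Function.Injective symMat := by
  intro x y h
  have h' : ∀ i j, symMat x i j = symMat y i j := fun i j => by rw [h]
  simp only [symMat_apply] at h'
  funext i
  fin_cases i
  · simpa using h' 0 0
  · simpa using h' 0 1
  · simpa using h' 0 2
  · simpa using h' 1 1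
  · simpa using h' 1 2
  · simpa using h' 2 2

theorem isSymm_symMat (x : Fin 6 → ℝ) : (symMat x).IsSymm := by
  ext i j
  fin_cases i <;> fin_cases j <;> simp [symMat_apply]

theorem exists_symMat_eq {A : Matrix (Fin 3) (Fin 3) ℝ} (hA : A.IsSymm) : ∃ x, symMat x = A := by
  refine ⟨![A 0 0, A 0 1, A 0 2, A 1 1, A 1 2, A 2 2], ?_⟩
  ext i j
  fin_cases i <;> fin_cases j <;> simp [symMat_apply, hA.apply 0 1, hA.apply 0 2, hA.apply 1 2]

theorem exists_orthogonal_matrix (M : Submodule ℝ (Matrix (Fin 3) (Fin 3) ℝ))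
    (hM : ∀ A ∈ M, A.IsSymm) (hdim : Module.finrank ℝ M = 5) :
    ∃ B : Matrix (Fin 3) (Fin 3) ℝ, B.IsSymm ∧ B ≠ 0 ∧
      ∀ A, A ∈ M ↔ A.IsSymm ∧ Matrix.trace (A * B) = 0 := by
  set N := M.comap symMat with hN
  have hmap : N.map symMat = M := by
    rw [hN, Submodule.map_comap_eq, inf_eq_right]
    intro A hA
    exact exists_symMat_eq (hM A hA)
  have hN5 : Module.finrank ℝ N = 5 := by
    rw [← hdim, ← hmap]
    exact (Submodule.equivMapOfInjective symMat symMat_injective N).finrank_eq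
  have hlt : N < ⊤ := by
    rw [lt_top_iff_ne_top]
    intro h
    rw [h, finrank_top] at hN5
    simp at hN5
  obtain ⟨φ, hφ0, hφ⟩ := Submodule.exists_le_ker_of_lt_top N hlt
  have hker : N = LinearMap.ker φ := by
    apply Submodule.eq_of_le_of_finrank_eq hφ
    have h1 := φ.finrank_range_add_finrank_ker
    have h2 : Module.finrank ℝ (LinearMap.range φ) = 1 := by
      rw [LinearMap.range_eq_top.2 (LinearMap.surjective hφ0), finrank_top]
      simp
    simp at h1
    omega
  set b : Fin 6 → ℝ := fun i => φ (Pi.single i 1) with hb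
  have hφb : ∀ x, φ x = ∑ i, x i * b i := fun x => by
    have h := LinearMap.pi_apply_eq_sum_univ φ x
    have hsingle : ∀ i : Fin 6, (fun j => if i = j then (1 : ℝ) else 0) = Pi.single i 1 := by
      intro i
      funext j
      simp [Pi.single_apply, eq_comm]
    simpa only [hsingle, smul_eq_mul] using h
  -- off-diagonal entries occur twice in the trace, hence the halves
  set B : Matrix (Fin 3) (Fin 3) ℝ :=
    symMat ![b 0, b 1 / 2, b 2 / 2, b 3, b 4 / 2, b 5] with hB
  have htr : ∀ x, Matrix.trace (symMat x * B) = φ x := by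
    intro x
    rw [hφb, hB]
    simp [Matrix.trace, symMat_apply, Fin.sum_univ_succ]
    ring
  refine ⟨B, isSymm_symMat _, ?_, ?_⟩
  · intro h0
    apply hφ0
    refine LinearMap.ext fun x => ?_
    rw [← htr, h0]
    simp
  · intro A
    constructor
    · intro hA
      refine ⟨hM A hA, ?_⟩
      obtain ⟨x, rfl⟩ := exists_symMat_eq (hM A hA)
      have hx : x ∈ N := hA
      rw [htr]
      rwa [hker] at hx
    · rintro ⟨hA, h⟩
      obtain ⟨x, rfl⟩ := exists_symMat_eq hA
      rw [htr] at h
      have hx : x ∈ N := by rw [hker]; exact h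
      exact hx

theorem exists_sorted_diagonalization (B : Matrix (Fin 3) (Fin 3) ℝ) (hB : B.IsSymm) :
    ∃ (U : Matrix (Fin 3) (Fin 3) ℝ) (d : Fin 3 → ℝ), Uᵀ * U = 1 ∧ Monotone d ∧
      B = U * Matrix.diagonal d * Uᵀ := by
  have hH : B.IsHermitian := by
    rw [Matrix.IsHermitian, Matrix.conjTranspose_eq_transpose_of_trivial]
    exact hB
  set V : Matrix (Fin 3) (Fin 3) ℝ := (hH.eigenvectorUnitary : Matrix (Fin 3) (Fin 3) ℝ) with hV
  have hVV : Vᵀ * V = 1 := by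
    have := Matrix.mem_unitaryGroup_iff'.1 hH.eigenvectorUnitary.2
    rwa [Matrix.star_eq_conjTranspose, Matrix.conjTranspose_eq_transpose_of_trivial] at this
  have hspec : B = V * Matrix.diagonal hH.eigenvalues * Vᵀ := by
    have := hH.spectral_theorem
    rw [Unitary.conjStarAlgAut_apply] at this
    simpa [Matrix.star_eq_conjTranspose, Matrix.conjTranspose_eq_transpose_of_trivial] using this
  set σ := Tuple.sort hH.eigenvalues with hσ
  refine ⟨V.submatrix id σ, hH.eigenvalues ∘ σ, ?_, Tuple.monotone_sort _, ?_⟩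
  · rw [Matrix.transpose_submatrix, ← Matrix.submatrix_mul _ _ _ id _ Function.bijective_id, hVV]
    exact Matrix.submatrix_one_equiv σ
  · rw [Matrix.transpose_submatrix, ← Matrix.submatrix_diagonal_equiv,
      Matrix.submatrix_mul_equiv, Matrix.submatrix_mul_equiv, ← hspec]
    simp

theorem trace_mul_conj (U A : Matrix (Fin 3) (Fin 3) ℝ) (d : Fin 3 → ℝ) :
    Matrix.trace (A * (U * Matrix.diagonal d * Uᵀ)) = ∑ i, d i * (Uᵀ * A * U) i i := by
  have : Matrix.trace (A * (U * Matrix.diagonal d * Uᵀ))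
      = Matrix.trace ((Uᵀ * A * U) * Matrix.diagonal d) := by
    rw [← Matrix.mul_assoc, Matrix.trace_mul_comm]
    simp only [Matrix.mul_assoc]
  rw [this]
  simp [Matrix.trace, Matrix.mul_diagonal, mul_comm]

/-- If all weights are nonnegative, then every matrix of the slice has a common zero on the
diagonal (after the change of coordinates), so the slice cannot span the hyperplane. -/
theorem false_of_semidefinite {S : Set (Matrix (Fin 3) (Fin 3) ℝ)}
    (U : Matrix (Fin 3) (Fin 3) ℝ) (d : Fin 3 → ℝ) (hU : Uᵀ * U = 1) (hd : ∀ i, 0 ≤ d i)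
    (hd0 : d ≠ 0)
    (hspan : ∀ A : Matrix (Fin 3) (Fin 3) ℝ, A.IsSymm → ∑ i, d i * (Uᵀ * A * U) i i = 0 →
      A ∈ Submodule.span ℝ S)
    (hS : ∀ A ∈ S, A.PosSemidef ∧ ∑ i, d i * (Uᵀ * A * U) i i = 0) : False := by
  obtain ⟨i, hi⟩ := Function.ne_iff.1 hd0
  obtain ⟨j, hij⟩ : ∃ j : Fin 3, j ≠ i := exists_ne i
  have hrow : ∀ A ∈ Submodule.span ℝ S, (Uᵀ * A * U) i j = 0 := by
    intro A hA
    induction hA using Submodule.span_induction with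
    | mem A hA =>
      obtain ⟨hpsd, hsum⟩ := hS A hA
      have hG : (Uᵀ * A * U).PosSemidef := by simpa using hpsd.conjTranspose_mul_mul_same U
      have hii : (Uᵀ * A * U) i i = 0 := by
        have := (Finset.sum_eq_zero_iff_of_nonneg
          (fun k _ => mul_nonneg (hd k) hG.diag_nonneg)).1 hsum i (Finset.mem_univ i)
        exact (mul_eq_zero.1 this).resolve_left hi
      have hdet := (hG.submatrix ![i, j]).det_nonneg
      have hs : (Uᵀ * A * U) j i = (Uᵀ * A * U) i j := by simpa using hG.isHermitian.apply i j
      rw [Matrix.det_fin_two] at hdet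
      simp only [Matrix.submatrix_apply, Matrix.cons_val_zero, Matrix.cons_val_one, hii, hs]
        at hdet
      nlinarith
    | zero => simp
    | add A B _ _ hA hB => simp [Matrix.mul_add, Matrix.add_mul, hA, hB]
    | smul c A _ hA => simp [hA]
  set E : Matrix (Fin 3) (Fin 3) ℝ := Matrix.single i j 1 + Matrix.single j i 1 with hE
  have hconj : Uᵀ * (U * E * Uᵀ) * U = E := by
    calc _ = (Uᵀ * U) * E * (Uᵀ * U) := by noncomm_ring
      _ = E := by rw [hU]; simp
  have hmem : U * E * Uᵀ ∈ Submodule.span ℝ S := by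
    apply hspan
    · rw [Matrix.IsSymm, Matrix.transpose_mul, Matrix.transpose_mul, Matrix.transpose_transpose,
        hE]
      simp [add_comm, Matrix.mul_assoc]
    · rw [hconj]
      refine Finset.sum_eq_zero fun k _ => ?_
      have : E k k = 0 := by
        simp only [hE, Matrix.add_apply, Matrix.single_apply]
        rw [if_neg, if_neg, add_zero]
        · rintro ⟨rfl, rfl⟩; exact hij rfl
        · rintro ⟨rfl, rfl⟩; exact hij rfl
      rw [this, mul_zero]
  have := hrow _ hmem
  rw [hconj, hE] at this
  simp [hij] at this

/-- If a `5`-dimensional slice `S` of `S₊³` is second-order cone representable,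
then `S` is the image of `Q × Q` under a linear map. -/
theorem socr_dim_five_image_of_Q2 (S : Set (Matrix (Fin 3) (Fin 3) ℝ))
    (hS : IsSlice 3 S) (hdim : Module.finrank ℝ (Submodule.span ℝ S) = 5)
    (hsocr : IsSOCR S) :
    ∃ f : ((Fin 3 → ℝ) × (Fin 3 → ℝ)) →ₗ[ℝ] Matrix (Fin 3) (Fin 3) ℝ,
      S = f '' {p | p.1 ∈ lorentzCone ∧ p.2 ∈ lorentzCone} := by
  obtain ⟨L, hL, hSL⟩ := hS
  have hspanL : Submodule.span ℝ S ≤ L := by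
    rw [Submodule.span_le, hSL]
    exact Set.inter_subset_right
  obtain ⟨B, hB, hB0, hM⟩ :=
    exists_orthogonal_matrix (Submodule.span ℝ S) (fun A hA => hL A (hspanL hA)) hdim
  obtain ⟨U, d, hU, hmono, hBU⟩ := exists_sorted_diagonalization B hB
  have hd0 : d ≠ 0 := by
    rintro rfl
    apply hB0
    rw [hBU]
    simp
  have hM' : ∀ A, A ∈ Submodule.span ℝ S ↔ A.IsSymm ∧ ∑ i, d i * (Uᵀ * A * U) i i = 0 := by
    intro A
    rw [hM, hBU, trace_mul_conj]
  have hS' : ∀ A, A ∈ S ↔ A.PosSemidef ∧ ∑ i, d i * (Uᵀ * A * U) i i = 0 := by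
    intro A
    constructor
    · intro hA
      refine ⟨?_, ((hM' A).1 (Submodule.subset_span hA)).2⟩
      rw [hSL] at hA
      exact hA.1
    · rintro ⟨hA, h⟩
      have hsymm : A.IsSymm := by
        have := hA.isHermitian
        rwa [Matrix.IsHermitian, Matrix.conjTranspose_eq_transpose_of_trivial] at this
      have hAL : A ∈ L := hspanL ((hM' A).2 ⟨hsymm, h⟩)
      rw [hSL]
      exact ⟨hA, hAL⟩
  have hconj : ∀ K A : Matrix (Fin 3) (Fin 3) ℝ,
      (U * K)ᵀ * A * (U * K) = Kᵀ * (Uᵀ * A * U) * K := fun K A => by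
    rw [Matrix.transpose_mul]
    noncomm_ring
  have hinv : ∀ K K' : Matrix (Fin 3) (Fin 3) ℝ, K' * K = 1 → (K' * Uᵀ) * (U * K) = 1 := by
    intro K K' h
    calc _ = K' * (Uᵀ * U) * K := by noncomm_ring
      _ = 1 := by rw [hU, Matrix.mul_one, h]
  have h01 : d 0 ≤ d 1 := hmono (by decide)
  have h12 : d 1 ≤ d 2 := hmono (by decide)
  -- `B` is indefinite, for otherwise `S` would span too small a space
  rcases le_or_gt 0 (d 0) with h0 | h0
  · refine (false_of_semidefinite U d hU ?_ hd0 (fun A h1 h2 => (hM' A).2 ⟨h1, h2⟩)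
      (fun A hA => (hS' A).1 hA)).elim
    intro i
    fin_cases i <;> simp <;> linarith
  rcases le_or_gt (d 2) 0 with h2 | h2
  · have hneg : ∀ A : Matrix (Fin 3) (Fin 3) ℝ, ∑ i, (-d) i * (Uᵀ * A * U) i i = 0 ↔
        ∑ i, d i * (Uᵀ * A * U) i i = 0 := fun A => by simp
    refine (false_of_semidefinite U (-d) hU ?_ (neg_ne_zero.2 hd0)
      (fun A h1 h2 => (hM' A).2 ⟨h1, (hneg A).1 h2⟩)
      (fun A hA => ⟨((hS' A).1 hA).1, (hneg A).2 ((hS' A).1 hA).2⟩)).elim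
    intro i
    fin_cases i <;> simp <;> linarith
  obtain ⟨a, ha, ha2⟩ : ∃ a : ℝ, a ≠ 0 ∧ a ^ 2 = - d 0 :=
    ⟨√(-d 0), (Real.sqrt_pos.2 (by linarith)).ne', Real.sq_sqrt (by linarith)⟩
  obtain ⟨c, hc, hc2⟩ : ∃ c : ℝ, c ≠ 0 ∧ c ^ 2 = d 2 :=
    ⟨√(d 2), (Real.sqrt_pos.2 h2).ne', Real.sq_sqrt h2.le⟩
  rcases lt_trichotomy (d 1) 0 with h1 | h1 | h1
  · obtain ⟨b, hb, hb2⟩ : ∃ b : ℝ, b ≠ 0 ∧ b ^ 2 = - d 1 :=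
      ⟨√(-d 1), (Real.sqrt_pos.2 (by linarith)).ne', Real.sq_sqrt (by linarith)⟩
    refine absurd hsocr (not_isSOCR_of_nondegenerate (U * !![a, 0, 0; 0, b, 0; 0, 0, c])
      (!![a⁻¹, 0, 0; 0, b⁻¹, 0; 0, 0, c⁻¹] * Uᵀ) (hinv _ _ ?_) fun A => ?_)
    · ext i j
      fin_cases i <;> fin_cases j <;> simp [Matrix.mul_apply, Fin.sum_univ_three, ha, hb, hc]
    · rw [hS', hconj]
      refine and_congr_right fun _ => ?_
      generalize Uᵀ * A * U = G
      have e : ∑ i, d i * G i i = -(a ^ 2 * G 0 0 + b ^ 2 * G 1 1 - c ^ 2 * G 2 2) := by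
        rw [ha2, hb2, hc2, Fin.sum_univ_three]
        ring
      rw [e, neg_eq_zero]
      simp [Matrix.mul_apply, Fin.sum_univ_three]
      ring_nf
  · -- the form `d 2 * x₂² + d 0 * x₀²` factors as `(c x₂ + a x₀) (c x₂ - a x₀)`
    refine image_of_degenerate (U * !![a, 0, -a; 0, 1, 0; c, 0, c])
      (!![a⁻¹ / 2, 0, c⁻¹ / 2; 0, 1, 0; -a⁻¹ / 2, 0, c⁻¹ / 2] * Uᵀ) (hinv _ _ ?_) fun A => ?_
    · ext i j
      fin_cases i <;> fin_cases j <;>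
        simp [Matrix.mul_apply, Fin.sum_univ_three] <;> field_simp <;> norm_num
    · rw [hS', hconj]
      refine and_congr_right fun hA => ?_
      have hs : (Uᵀ * A * U) 2 0 = (Uᵀ * A * U) 0 2 := by
        have hG : (Uᵀ * A * U).PosSemidef := by simpa using hA.conjTranspose_mul_mul_same U
        simpa using hG.isHermitian.apply 0 2
      revert hs
      generalize Uᵀ * A * U = G
      intro hs
      have e : ∑ i, d i * G i i = c ^ 2 * G 2 2 - a ^ 2 * G 0 0 := by
        rw [ha2, hc2, Fin.sum_univ_three, h1]
        ring
      rw [e]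
      simp [Matrix.mul_apply, Fin.sum_univ_three, hs]
      ring_nf
  · obtain ⟨b, hb, hb2⟩ : ∃ b : ℝ, b ≠ 0 ∧ b ^ 2 = d 1 :=
      ⟨√(d 1), (Real.sqrt_pos.2 h1).ne', Real.sq_sqrt h1.le⟩
    refine absurd hsocr (not_isSOCR_of_nondegenerate (U * !![0, 0, a; 0, b, 0; c, 0, 0])
      (!![0, 0, c⁻¹; 0, b⁻¹, 0; a⁻¹, 0, 0] * Uᵀ) (hinv _ _ ?_) fun A => ?_)
    · ext i j
      fin_cases i <;> fin_cases j <;> simp [Matrix.mul_apply, Fin.sum_univ_three, ha, hb, hc]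
    · rw [hS', hconj]
      refine and_congr_right fun _ => ?_
      generalize Uᵀ * A * U = G
      have e : ∑ i, d i * G i i = c ^ 2 * G 2 2 + b ^ 2 * G 1 1 - a ^ 2 * G 0 0 := by
        rw [ha2, hb2, hc2, Fin.sum_univ_three]
        ring
      rw [e]
      simp [Matrix.mul_apply, Fin.sum_univ_three]
      ring_nf
end
end

section
/- Let n ≤ 3, let A : ℝⁿ → S³ be a linear map into the real symmetric 3×3 matrices and let B ∈ S³. Then the spectrahedron SP_{A,B} = {x ∈ ℝⁿ : A(x) + B is positive semidefinite} is affinely second-order cone representable: there exist a positive integer m, an affine subspace W of (ℝ³)ᵐ, and an affine map f : (ℝ³)ᵐ → ℝⁿ such that SP_{A,B} = f(Qᵐ ∩ W). -/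
/-! The key point is that a pencil of real symmetric `3 × 3` matrices always contains a nonzero
singular member, because the determinant is odd. The matrices `A x + B` lie in a space of dimension
at most `4`, whose orthogonal complement in the `6`-dimensional space of symmetric matrices contains
such a pencil; hence some nonzero singular symmetric `M` is orthogonal to every `A x + B`
(`exists_singular_orthogonal`).

Diagonalizing `M` leaves a relation `a Y₀₀ + b Y₁₁ = 0` with `(a, b) ≠ 0`. If `a` and `b` have
opposite signs, a further change of basis turns it into `Y₀₁ = 0`; otherwise positive
semidefiniteness forces `Y₀₀ = 0` or `Y₁₁ = 0`, and so again `Y₀₁ = 0`. Therefore one congruence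
makes the `(0, 1)` entry of all positive semidefinite matrices orthogonal to `M` vanish
(`exists_congruence`).

A symmetric matrix with `Y₀₁ = 0` is positive semidefinite iff it is a sum of two positive
semidefinite matrices supported on the index pairs `{0, 2}` and `{1, 2}` (chordal sparsity,
`posSemidef_and_iff`), and positive semidefiniteness of a `2 × 2` matrix is a Lorentz cone condition
(`vec_mem_lorentzCone_iff`). -/

open Matrix

noncomputable section

/-! ### Binary forms and the chordal decomposition -/

/-- Positive semidefiniteness of the binary form with matrix `!![a, b; b, d]` is membership in the
Lorentz cone. -/
lemma vec_mem_lorentzCone_iff (a b d : ℝ) :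
    ![a - d, 2 * b, a + d] ∈ lorentzCone ↔
      ∀ y z : ℝ, 0 ≤ a * y ^ 2 + 2 * b * y * z + d * z ^ 2 := by
  simp only [lorentzCone, Set.mem_ofPred_eq, Real.sqrt_le_iff, cons_val_zero, cons_val_one, cons_val]
  constructor
  · rintro ⟨h1, h2⟩ y z
    have hb : b ^ 2 ≤ a * d := by nlinarith
    have ha : 0 ≤ a := by nlinarith [sq_nonneg b, sq_nonneg a]
    have hd : 0 ≤ d := by nlinarith [sq_nonneg b, sq_nonneg d]
    rcases ha.eq_or_lt with rfl | ha
    · have : b = 0 := by nlinarith [sq_nonneg b]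
      subst this
      nlinarith [mul_nonneg hd (sq_nonneg z)]
    · have : 0 ≤ a * (a * y ^ 2 + 2 * b * y * z + d * z ^ 2) := by
        nlinarith [sq_nonneg (a * y + b * z), mul_nonneg (sub_nonneg.2 hb) (sq_nonneg z)]
      exact nonneg_of_mul_nonneg_right this ha
  · intro h
    have ha := h 1 0
    have hd := h 0 1
    refine ⟨by linarith, ?_⟩
    have hb : b ^ 2 ≤ a * d := by
      have := discrim_le_zero (a := a) (b := 2 * b) (c := d) (fun y => by have := h y 1; nlinarith)
      unfold discrim at this
      nlinarith
    nlinarith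

lemma posSemidef_iff_form {Y : Matrix (Fin 3) (Fin 3) ℝ} (hY : Y.IsSymm) :
    Y.PosSemidef ↔ ∀ x y z : ℝ, 0 ≤ Y 0 0 * x ^ 2 + Y 1 1 * y ^ 2 + Y 2 2 * z ^ 2
      + 2 * Y 0 1 * x * y + 2 * Y 0 2 * x * z + 2 * Y 1 2 * y * z := by
  have h10 : Y 1 0 = Y 0 1 := hY.apply _ _
  have h20 : Y 2 0 = Y 0 2 := hY.apply _ _
  have h21 : Y 2 1 = Y 1 2 := hY.apply _ _
  have key : ∀ v : Fin 3 → ℝ, star v ⬝ᵥ (Y *ᵥ v) =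
      Y 0 0 * v 0 ^ 2 + Y 1 1 * v 1 ^ 2 + Y 2 2 * v 2 ^ 2
      + 2 * Y 0 1 * v 0 * v 1 + 2 * Y 0 2 * v 0 * v 2 + 2 * Y 1 2 * v 1 * v 2 := by
    intro v
    simp only [dotProduct, mulVec, Fin.sum_univ_three, Pi.star_apply, star_trivial, h10, h20, h21]
    ring
  rw [posSemidef_iff_dotProduct_mulVec]
  constructor
  · rintro ⟨-, h⟩ x y z
    have := h ![x, y, z]
    rw [key] at this
    simpa using this
  · intro h
    refine ⟨by simpa [IsHermitian, conjTranspose_eq_transpose_of_trivial] using hY.eq, fun v => ?_⟩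
    rw [key]
    exact h _ _ _

/-- The chordal decomposition of a positive semidefinite matrix with vanishing `(0, 1)` entry: the
last diagonal entry splits as `c + (Y 2 2 - c)` so that both `2 × 2` pieces are positive
semidefinite. -/
lemma posSemidef_and_iff {Y : Matrix (Fin 3) (Fin 3) ℝ} (hY : Y.IsSymm) :
    (Y.PosSemidef ∧ Y 0 1 = 0) ↔ ∃ c : ℝ,
      ![Y 0 0 - c, 2 * Y 0 2, Y 0 0 + c] ∈ lorentzCone ∧
      ![Y 1 1 - (Y 2 2 - c), 2 * Y 1 2, Y 1 1 + (Y 2 2 - c)] ∈ lorentzCone ∧ Y 0 1 = 0 := by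
  simp only [vec_mem_lorentzCone_iff, posSemidef_iff_form hY]
  constructor
  · rintro ⟨h, h01⟩
    -- If `Y 0 0 = 0` then `Y 0 2 = 0`, so this identity also holds for the junk value of `x / 0`.
    have h0 : Y 0 0 * (Y 0 2 / Y 0 0) = Y 0 2 := by
      by_cases h00 : Y 0 0 = 0
      · have := discrim_le_zero (a := Y 0 0) (b := 2 * Y 0 2) (c := Y 2 2)
          (fun x => by have := h x 0 1; nlinarith)
        have h02 : Y 0 2 = 0 := by
          unfold discrim at this
          rw [h00] at this
          nlinarith [sq_nonneg (Y 0 2)]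
        simp [h02]
      · field_simp
    generalize Y 0 2 / Y 0 0 = t at h0
    have h00 : 0 ≤ Y 0 0 := by simpa using h 1 0 0
    refine ⟨Y 0 0 * t ^ 2, fun y z => ?_, fun y z => ?_, h01⟩
    · have := mul_nonneg h00 (sq_nonneg (y + t * z))
      rw [← h0]
      linarith
    · have := h (-t * z) y z
      rw [h01, ← h0] at this
      linarith
  · rintro ⟨c, h1, h2, h01⟩
    refine ⟨fun x y z => ?_, h01⟩
    have := h1 x z
    have := h2 y z
    rw [h01]
    linarith

/-! ### A singular matrix orthogonal to the linear matrix pencil -/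

/-- The symmetric matrix with the given six upper triangular entries. -/
def symOfVec : (Fin 6 → ℝ) →ₗ[ℝ] Matrix (Fin 3) (Fin 3) ℝ where
  toFun v := !![v 0, v 1, v 2; v 1, v 3, v 4; v 2, v 4, v 5]
  map_add' v w := by ext i j; fin_cases i <;> fin_cases j <;> simp
  map_smul' c v := by ext i j; fin_cases i <;> fin_cases j <;> simp

lemma symOfVec_isSymm (v : Fin 6 → ℝ) : (symOfVec v).IsSymm := by
  ext i j; fin_cases i <;> fin_cases j <;> simp [symOfVec]

lemma symOfVec_injective : Function.Injective symOfVec := by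
  rw [injective_iff_map_eq_zero]
  intro v hv
  have h := fun i j => congrFun (congrFun hv i) j
  have h00 := h 0 0
  have h01 := h 0 1
  have h02 := h 0 2
  have h11 := h 1 1
  have h12 := h 1 2
  have h22 := h 2 2
  simp [symOfVec] at h00 h01 h02 h11 h12 h22
  ext i; fin_cases i <;> simpa

/-- Orthogonality to all `A x + B` imposes at most four linear conditions on the six-dimensional space
of symmetric matrices, so it holds along a pencil; the determinant changes sign along that pencil. -/
lemma exists_singular_orthogonal (n : ℕ) (hn : n ≤ 3)
    (A : (Fin n → ℝ) →ₗ[ℝ] Matrix (Fin 3) (Fin 3) ℝ) (B : Matrix (Fin 3) (Fin 3) ℝ) :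
    ∃ M : Matrix (Fin 3) (Fin 3) ℝ, M.IsSymm ∧ M ≠ 0 ∧ M.det = 0 ∧
      ∀ x, trace (M * (A x + B)) = 0 := by
  let Φ : (Fin 6 → ℝ) →ₗ[ℝ] (Fin n → ℝ) × ℝ :=
    { toFun := fun v => (fun i => trace (symOfVec v * A (Pi.single i 1)), trace (symOfVec v * B))
      map_add' := fun v w => by ext <;> simp [add_mul]
      map_smul' := fun c v => by ext <;> simp }
  have hdim : 1 < Module.finrank ℝ (LinearMap.ker Φ) := by
    have h1 := LinearMap.finrank_range_add_finrank_ker Φ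
    have h2 := Submodule.finrank_le (LinearMap.range Φ)
    simp only [Module.finrank_prod, Module.finrank_fin_fun, Module.finrank_self] at h1 h2
    omega
  obtain ⟨v, hv⟩ : ∃ v : LinearMap.ker Φ, v ≠ 0 := by
    have : Nontrivial (LinearMap.ker Φ) := Module.nontrivial_of_finrank_pos (R := ℝ) (by omega)
    exact exists_ne 0
  obtain ⟨w, hw⟩ := exists_linearIndependent_pair_of_one_lt_finrank hdim hv
  let g : ℝ → LinearMap.ker Φ := fun θ => Real.cos θ • v + Real.sin θ • w
  have hcont : Continuous fun θ => (symOfVec (g θ : Fin 6 → ℝ)).det := by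
    have : Continuous fun θ => symOfVec (g θ : Fin 6 → ℝ) := by
      simp only [g, Submodule.coe_add, Submodule.coe_smul, map_add, map_smul]
      fun_prop
    exact this.matrix_det
  -- `g π = -g 0`, and `det` is odd on `3 × 3` matrices.
  have hodd : (symOfVec (g Real.pi : Fin 6 → ℝ)).det = -(symOfVec (g 0 : Fin 6 → ℝ)).det := by
    have : g Real.pi = -g 0 := by simp only [g]; simp; module
    rw [this, Submodule.coe_neg, map_neg, det_neg]
    norm_num [Fintype.card_fin]
  obtain ⟨θ, hθ⟩ : ∃ θ, (symOfVec (g θ : Fin 6 → ℝ)).det = 0 := by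
    rcases le_total 0 (symOfVec (g 0 : Fin 6 → ℝ)).det with h | h
    · exact mem_range_of_exists_le_of_exists_ge hcont ⟨Real.pi, by linarith⟩ ⟨0, h⟩
    · exact mem_range_of_exists_le_of_exists_ge hcont ⟨0, h⟩ ⟨Real.pi, by linarith⟩
  refine ⟨symOfVec (g θ : Fin 6 → ℝ), symOfVec_isSymm _, fun h0 => ?_, hθ, fun x => ?_⟩
  · have h1 : g θ = 0 := Subtype.ext (symOfVec_injective (by simpa using h0))
    obtain ⟨hc, hs⟩ := LinearIndependent.pair_iff.1 hw _ _ h1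
    have := Real.sin_sq_add_cos_sq θ
    rw [hc, hs] at this
    norm_num at this
  · have hk : Φ (g θ) = 0 := (g θ).2
    have hB : trace (symOfVec (g θ : Fin 6 → ℝ) * B) = 0 := congrArg Prod.snd hk
    have hA : ∀ i, trace (symOfVec (g θ : Fin 6 → ℝ) * A (Pi.single i 1)) = 0 :=
      fun i => congrFun (congrArg Prod.fst hk) i
    have hx : A x = ∑ i, x i • A (Pi.single i 1) := by
      conv_lhs => rw [pi_eq_sum_univ' x]
      simp [map_sum]
    rw [mul_add, trace_add, hB, hx, Finset.mul_sum, trace_sum]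
    simp [hA]

/-! ### Congruence to a vanishing off-diagonal entry -/

lemma posSemidef_entry_eq_zero {Y : Matrix (Fin 3) (Fin 3) ℝ} (hY : Y.PosSemidef)
    (h : Y 0 0 = 0 ∨ Y 1 1 = 0) : Y 0 1 = 0 := by
  have hs : Y.IsSymm := by
    simpa [IsSymm, conjTranspose_eq_transpose_of_trivial] using hY.isHermitian.eq
  have hf := (posSemidef_iff_form hs).1 hY
  have := discrim_le_zero (a := Y 0 0) (b := 2 * Y 0 1) (c := Y 1 1)
    (fun x => by have := hf x 1 0; nlinarith)
  unfold discrim at this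
  have h0 : Y 0 0 * Y 1 1 = 0 := by rcases h with h | h <;> simp [h]
  nlinarith [sq_nonneg (Y 0 1)]

/-- The opposite-sign case: `a Y₀₀ + b Y₁₁` is, up to congruence, an off-diagonal entry. -/
lemma exists_congruence_of_pos_neg {a b : ℝ} (ha : 0 < a) (hb : b < 0) :
    ∃ R : Matrix (Fin 3) (Fin 3) ℝ, R.det ≠ 0 ∧ ∀ Y : Matrix (Fin 3) (Fin 3) ℝ, Y.PosSemidef →
      a * Y 0 0 + b * Y 1 1 = 0 → (Rᵀ * Y * R) 0 1 = 0 := by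
  have hα : √a * √a = a := Real.mul_self_sqrt ha.le
  have hβ : √(-b) * √(-b) = -b := Real.mul_self_sqrt (by linarith)
  have hα0 : 0 < √a := Real.sqrt_pos.2 ha
  have hβ0 : 0 < √(-b) := Real.sqrt_pos.2 (by linarith)
  refine ⟨!![√a, √a, 0; √(-b), -√(-b), 0; 0, 0, 1], ?_, fun Y hY h => ?_⟩
  · rw [det_fin_three]
    simp
    nlinarith [mul_pos hα0 hβ0]
  · have h10 : Y 1 0 = Y 0 1 := by simpa using (hY.isHermitian.apply 0 1)
    simp [mul_apply, Fin.sum_univ_three, h10]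
    linear_combination h + Y 0 0 * hα - Y 1 1 * hβ

lemma exists_congruence_of_diag {a b : ℝ} (hab : a ≠ 0 ∨ b ≠ 0) :
    ∃ R : Matrix (Fin 3) (Fin 3) ℝ, R.det ≠ 0 ∧ ∀ Y : Matrix (Fin 3) (Fin 3) ℝ, Y.PosSemidef →
      a * Y 0 0 + b * Y 1 1 = 0 → (Rᵀ * Y * R) 0 1 = 0 := by
  by_cases h1 : 0 < a ∧ b < 0
  · exact exists_congruence_of_pos_neg h1.1 h1.2
  by_cases h2 : a < 0 ∧ 0 < b
  · obtain ⟨R, hR, h⟩ := exists_congruence_of_pos_neg (a := -a) (b := -b)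
      (by linarith) (by linarith)
    exact ⟨R, hR, fun Y hY hz => h Y hY (by linarith)⟩
  refine ⟨1, by simp, fun Y hY hz => ?_⟩
  have hp : 0 ≤ a * b := by
    rcases lt_trichotomy a 0 with ha | ha | ha
    · exact mul_nonneg_of_nonpos_of_nonpos ha.le (not_lt.1 fun hb => h2 ⟨ha, hb⟩)
    · simp [ha]
    · exact mul_nonneg ha.le (not_lt.1 fun hb => h1 ⟨ha, hb⟩)
  have h0 : 0 ≤ Y 0 0 := hY.diag_nonneg
  have h1 : 0 ≤ Y 1 1 := hY.diag_nonneg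
  simp only [transpose_one, one_mul, mul_one]
  apply posSemidef_entry_eq_zero hY
  rcases hab with ha | hb
  · left
    have : a ^ 2 * Y 0 0 = 0 := by
      have hz' : a ^ 2 * Y 0 0 + a * b * Y 1 1 = 0 := by linear_combination a * hz
      linarith [mul_nonneg (sq_nonneg a) h0, mul_nonneg hp h1]
    simpa [ha] using this
  · right
    have : b ^ 2 * Y 1 1 = 0 := by
      have hz' : b ^ 2 * Y 1 1 + a * b * Y 0 0 = 0 := by linear_combination b * hz
      linarith [mul_nonneg (sq_nonneg b) h1, mul_nonneg hp h0]
    simpa [hb] using this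

lemma exists_congruence {M : Matrix (Fin 3) (Fin 3) ℝ} (hM : M.IsSymm) (hM0 : M ≠ 0)
    (hdet : M.det = 0) :
    ∃ P : Matrix (Fin 3) (Fin 3) ℝ, P.det ≠ 0 ∧ ∀ X : Matrix (Fin 3) (Fin 3) ℝ, X.PosSemidef →
      trace (M * X) = 0 → (Pᵀ * X * P) 0 1 = 0 := by
  have hH : M.IsHermitian := by
    simpa [IsHermitian, conjTranspose_eq_transpose_of_trivial] using hM.eq
  obtain ⟨U, d, hU, hMU⟩ : ∃ (U : Matrix (Fin 3) (Fin 3) ℝ) (d : Fin 3 → ℝ),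
      U.det ≠ 0 ∧ M = U * diagonal d * Uᵀ := by
    refine ⟨hH.eigenvectorUnitary, hH.eigenvalues, ?_, ?_⟩
    · have := (Matrix.UnitaryGroup.det_isUnit hH.eigenvectorUnitary)
      exact this.ne_zero
    · have := hH.spectral_theorem
      rw [Unitary.conjStarAlgAut_apply] at this
      simpa [star_eq_conjTranspose, conjTranspose_eq_transpose_of_trivial] using this
  have hd : ∃ i, d i = 0 := by
    rw [hMU, det_mul, det_mul, det_transpose, det_diagonal] at hdet
    simpa [hU, Finset.prod_eq_zero_iff] using hdet
  obtain ⟨i, hi⟩ := hd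
  -- Permute the eigenbasis so that the kernel vector comes last.
  let e : Equiv.Perm (Fin 3) := Equiv.swap 2 i
  have he : d (e 2) = 0 := by simpa [e] using hi
  have hne : d (e 0) ≠ 0 ∨ d (e 1) ≠ 0 := by
    by_contra! h
    apply hM0
    have : d = 0 := by
      ext j
      obtain ⟨k, rfl⟩ := e.surjective j
      fin_cases k
      exacts [h.1, h.2, he]
    rw [hMU, this]
    simp
  obtain ⟨R, hR, hRY⟩ := exists_congruence_of_diag hne
  let V := U.submatrix id e
  have hV : V.det ≠ 0 := by
    simp only [V, det_permute']
    exact mul_ne_zero (by exact_mod_cast (Equiv.Perm.sign e).ne_zero) hU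
  refine ⟨V * R, by rw [det_mul]; exact mul_ne_zero hV hR, fun X hX hX0 => ?_⟩
  have hPSD : (Vᵀ * X * V).PosSemidef := by
    simpa [conjTranspose_eq_transpose_of_trivial] using hX.conjTranspose_mul_mul_same V
  have := hRY _ hPSD ?_
  · simpa [transpose_mul, Matrix.mul_assoc] using this
  · have h1 : trace (M * X) = ∑ j, d j * (Uᵀ * X * U) j j := by
      rw [hMU, Matrix.mul_assoc, Matrix.mul_assoc, trace_mul_comm, Matrix.mul_assoc]
      simp [trace, diagonal_mul]
    have h2 : ∀ j, (Vᵀ * X * V) j j = (Uᵀ * X * U) (e j) (e j) := by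
      intro j
      simp [V, mul_apply]
    rw [h1, ← Equiv.sum_comp e, Fin.sum_univ_three, he] at hX0
    rw [h2, h2]
    linarith

/-! ### Affine second-order cone representations -/

/-- Projections of sets cut out by two Lorentz cone conditions and one affine equation, eliminating
one auxiliary real variable, are affinely second-order cone representable. A free real variable `t`
is encoded by a cone point `(t, 0, |t|)`. -/
lemma affinely_socr_of_conditions {n : ℕ} (g₁ g₂ : (Fin n → ℝ) × ℝ →ᵃ[ℝ] (Fin 3 → ℝ))
    (h : (Fin n → ℝ) × ℝ →ᵃ[ℝ] ℝ) :
    ∃ m : ℕ, 0 < m ∧ ∃ W : AffineSubspace ℝ (Fin m → Fin 3 → ℝ),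
      ∃ f : (Fin m → Fin 3 → ℝ) →ᵃ[ℝ] (Fin n → ℝ),
        {x : Fin n → ℝ | ∃ c : ℝ, g₁ (x, c) ∈ lorentzCone ∧ g₂ (x, c) ∈ lorentzCone ∧
          h (x, c) = 0} = f '' (lorentzPow m ∩ (W : Set (Fin m → Fin 3 → ℝ))) := by
  let π : (Fin (n + 1 + 1 + 1) → Fin 3 → ℝ) →ₗ[ℝ] (Fin n → ℝ) × ℝ :=
    { toFun := fun y => (fun i => y i.succ.succ.succ 0, y (Fin.succ (Fin.succ 0)) 0)
      map_add' := fun y z => rfl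
      map_smul' := fun c y => rfl }
  let F : (Fin (n + 1 + 1 + 1) → Fin 3 → ℝ) →ᵃ[ℝ] (Fin 3 → ℝ) × (Fin 3 → ℝ) × ℝ :=
    ((LinearMap.proj (R := ℝ) (φ := fun _ => Fin 3 → ℝ) 0).toAffineMap -
        g₁.comp π.toAffineMap).prod
      (((LinearMap.proj (R := ℝ) (φ := fun _ => Fin 3 → ℝ) (Fin.succ 0)).toAffineMap -
        g₂.comp π.toAffineMap).prod (h.comp π.toAffineMap))
  refine ⟨n + 1 + 1 + 1, by omega, (AffineSubspace.mk' 0 ⊥).comap F,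
    ((LinearMap.fst ℝ (Fin n → ℝ) ℝ).comp π).toAffineMap, ?_⟩
  have hW : ∀ y, y ∈ (AffineSubspace.mk' (0 : (Fin 3 → ℝ) × (Fin 3 → ℝ) × ℝ) ⊥).comap F ↔
      y 0 = g₁ (π y) ∧ y (Fin.succ 0) = g₂ (π y) ∧ h (π y) = 0 := by
    intro y
    rw [AffineSubspace.mem_comap, AffineSubspace.mem_mk']
    simp [F, Prod.ext_iff, sub_eq_zero]
  have hfree : ∀ t : ℝ, ![t, 0, |t|] ∈ lorentzCone := by
    intro t
    simp [lorentzCone, Real.sqrt_sq_eq_abs]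
  ext x
  constructor
  · rintro ⟨c, h1, h2, h3⟩
    refine ⟨Fin.cons (g₁ (x, c)) (Fin.cons (g₂ (x, c))
      (Fin.cons ![c, 0, |c|] (fun i => ![x i, 0, |x i|]))), ⟨?_, ?_⟩, ?_⟩
    · intro i
      refine Fin.cases ?_ (fun i => Fin.cases ?_ (fun i => Fin.cases ?_ (fun i => ?_) i) i) i
      · simpa using h1
      · simpa using h2
      · exact hfree c
      · simpa using hfree (x i)
    · rw [SetLike.mem_coe, hW]
      have hπ : π (Fin.cons (g₁ (x, c)) (Fin.cons (g₂ (x, c))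
          (Fin.cons ![c, 0, |c|] (fun i => ![x i, 0, |x i|])))) = (x, c) := by
        rfl
      rw [hπ]
      exact ⟨by simp, by simp, h3⟩
    · simp [π]
  · rintro ⟨y, ⟨hy, hyW⟩, rfl⟩
    rw [SetLike.mem_coe, hW] at hyW
    obtain ⟨h1, h2, h3⟩ := hyW
    refine ⟨(π y).2, ?_, ?_, h3⟩
    · have := hy 0
      rw [h1] at this
      exact this
    · have := hy (Fin.succ 0)
      rw [h2] at this
      exact this

/-- Every spectrahedron defined by an LMI of size `3` in dimension `n ≤ 3` is
affinely second-order cone representable. -/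
theorem spectrahedron_dim_le_three_affinely_socr (n : ℕ) (hn : n ≤ 3)
    (A : (Fin n → ℝ) →ₗ[ℝ] Matrix (Fin 3) (Fin 3) ℝ) (hA : ∀ x, (A x).IsSymm)
    (B : Matrix (Fin 3) (Fin 3) ℝ) (hB : B.IsSymm) :
    ∃ m : ℕ, 0 < m ∧ ∃ W : AffineSubspace ℝ (Fin m → Fin 3 → ℝ),
      ∃ f : (Fin m → Fin 3 → ℝ) →ᵃ[ℝ] (Fin n → ℝ),
        {x : Fin n → ℝ | (A x + B).PosSemidef} =
          f '' (lorentzPow m ∩ (W : Set (Fin m → Fin 3 → ℝ))) := by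
  obtain ⟨M, hM, hM0, hdet, horth⟩ := exists_singular_orthogonal n hn A B
  obtain ⟨P, hP, hP01⟩ := exists_congruence hM hM0 hdet
  let T : Matrix (Fin 3) (Fin 3) ℝ →ₗ[ℝ] Matrix (Fin 3) (Fin 3) ℝ :=
    { toFun := fun X => Pᵀ * X * P
      map_add' := fun X Y => by rw [mul_add, add_mul]
      map_smul' := fun c X => by simp }
  let Y : (Fin n → ℝ) × ℝ →ᵃ[ℝ] Matrix (Fin 3) (Fin 3) ℝ × ℝ :=
    ((T ∘ₗ A ∘ₗ LinearMap.fst ℝ _ _).toAffineMap + AffineMap.const ℝ _ (T B)).prod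
      (LinearMap.snd ℝ _ _).toAffineMap
  let l₁ : Matrix (Fin 3) (Fin 3) ℝ × ℝ →ₗ[ℝ] (Fin 3 → ℝ) :=
    { toFun := fun p => ![p.1 0 0 - p.2, 2 * p.1 0 2, p.1 0 0 + p.2]
      map_add' := fun p q => by ext i; fin_cases i <;> simp <;> ring
      map_smul' := fun c p => by ext i; fin_cases i <;> simp <;> ring }
  let l₂ : Matrix (Fin 3) (Fin 3) ℝ × ℝ →ₗ[ℝ] (Fin 3 → ℝ) :=
    { toFun := fun p => ![p.1 1 1 - (p.1 2 2 - p.2), 2 * p.1 1 2, p.1 1 1 + (p.1 2 2 - p.2)]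
      map_add' := fun p q => by ext i; fin_cases i <;> simp <;> ring
      map_smul' := fun c p => by ext i; fin_cases i <;> simp <;> ring }
  let l₃ : Matrix (Fin 3) (Fin 3) ℝ × ℝ →ₗ[ℝ] ℝ :=
    { toFun := fun p => p.1 0 1
      map_add' := fun p q => rfl
      map_smul' := fun c p => rfl }
  convert affinely_socr_of_conditions (l₁.toAffineMap.comp Y) (l₂.toAffineMap.comp Y)
    (l₃.toAffineMap.comp Y) using 8 with m _ W f
  ext x
  have hY : ∀ c, Y (x, c) = (Pᵀ * (A x + B) * P, c) := by
    intro c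
    simp [Y, T, mul_add, add_mul]
  have hsymm : (Pᵀ * (A x + B) * P).IsSymm := by
    simp [IsSymm, transpose_mul, (hA x).eq, hB.eq, Matrix.mul_assoc]
  have hcong : (Pᵀ * (A x + B) * P).PosSemidef ↔ (A x + B).PosSemidef := by
    have hu : IsUnit P := (Matrix.isUnit_iff_isUnit_det P).2 hP.isUnit
    simpa [star_eq_conjTranspose, conjTranspose_eq_transpose_of_trivial] using
      hu.posSemidef_star_left_conjugate_iff (x := A x + B)
  have hiff : (A x + B).PosSemidef ↔
      (Pᵀ * (A x + B) * P).PosSemidef ∧ (Pᵀ * (A x + B) * P) 0 1 = 0 := by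
    rw [hcong]
    exact ⟨fun h => ⟨h, hP01 _ h (horth x)⟩, fun h => h.1⟩
  simp only [Set.mem_ofPred_eq, AffineMap.comp_apply, LinearMap.coe_toAffineMap, hY]
  rw [hiff, posSemidef_and_iff hsymm]
  rfl
end
end

section
/- Let k ≥ 2 and let S = S₊ᵏ ∩ L be a slice of S₊ᵏ, where L is a linear subspace of Sᵏ. Then the following are equivalent: (i) S has codimension 1, i.e., the linear span of S has dimension k(k+1)/2 − 1; (ii) S = S_B for some indefinite matrix B ∈ Sᵏ. -/
/-!
For symmetric `B ≠ 0` the hyperplane `H_B = {A symmetric : tr(AB) = 0}` has dimension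
`k(k+1)/2 - 1`, and both directions compare `H_B` with the span `W` of the slice.

If `B` is indefinite, `S_B` spans `H_B` (`span_sliceOrth_of_indefinite`): a symmetric `A` is the
difference of the psd matrices `(A ± I)²/4`, and when `tr(AB) = 0` these have the same trace
product with `B`. Adding one common psd matrix, a nonnegative multiple of some `x xᵀ`, makes that
trace product vanish, because the form `xᵀBx` takes both signs.

Conversely, if `W` has codimension one, then `W = H_B` for some symmetric `B ≠ 0`, so the slice is
`S_B`. Such a `B` is not semidefinite (`not_posSemidef_of_le_span`): for psd `B`, every `A ∈ S_B`
satisfies `AB = 0`, hence so does every `A ∈ H_B`, which is impossible when `k ≥ 2`. The case of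
`-B` is the same, since `S_B = S_{-B}`.
-/

open Matrix

noncomputable section

/-- The space `Sᵏ` of symmetric matrices, as a subspace of all `k × k` matrices. -/
def symSub (k : ℕ) : Submodule ℝ (Matrix (Fin k) (Fin k) ℝ) where
  carrier := {A | A.IsSymm}
  add_mem' := fun hA hB => hA.add hB
  zero_mem' := Matrix.isSymm_zero
  smul_mem' := fun c _ hA => hA.smul c

/-- The linear functional `A ↦ tr(AB)`. -/
def trForm (k : ℕ) (B : Matrix (Fin k) (Fin k) ℝ) : Matrix (Fin k) (Fin k) ℝ →ₗ[ℝ] ℝ where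
  toFun A := Matrix.trace (A * B)
  map_add' := by intro A A'; simp [Matrix.add_mul]
  map_smul' := by intro c A; simp

/-- The space `{A ∈ Sᵏ : tr(AB) = 0}`; a hyperplane in `Sᵏ` when `B` is symmetric and nonzero. -/
def symOrth (k : ℕ) (B : Matrix (Fin k) (Fin k) ℝ) : Submodule ℝ (Matrix (Fin k) (Fin k) ℝ) :=
  symSub k ⊓ LinearMap.ker (trForm k B)

lemma mem_symOrth {k : ℕ} {A B : Matrix (Fin k) (Fin k) ℝ} :
    A ∈ symOrth k B ↔ A.IsSymm ∧ Matrix.trace (A * B) = 0 := Iff.rfl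

lemma Matrix.PosSemidef.isSymm_real {k : ℕ} {A : Matrix (Fin k) (Fin k) ℝ}
    (hA : A.PosSemidef) : A.IsSymm := by
  have h := hA.isHermitian
  rwa [Matrix.IsHermitian, Matrix.conjTranspose_eq_transpose_of_trivial] at h

lemma Matrix.IsSymm.isHermitian_real {k : ℕ} {A : Matrix (Fin k) (Fin k) ℝ}
    (hA : A.IsSymm) : A.IsHermitian := by
  rwa [Matrix.IsHermitian, Matrix.conjTranspose_eq_transpose_of_trivial]

/-- Symmetric matrices are the functions on unordered pairs of indices. -/
def symEquiv (k : ℕ) : symSub k ≃ₗ[ℝ] (Sym2 (Fin k) → ℝ) where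
  toFun A := fun z => Sym2.lift ⟨fun i j => A.1 i j, fun i j => A.2.apply j i⟩ z
  map_add' := by
    intro A B; ext z; induction z with | _ i j => simp
  map_smul' := by
    intro c A; ext z; induction z with | _ i j => simp
  invFun f := ⟨Matrix.of fun i j => f s(i, j), by
    ext i j; simp [Sym2.eq_swap]⟩
  left_inv := by intro A; ext i j; simp
  right_inv := by intro f; ext z; induction z with | _ i j => simp

lemma finrank_symSub (k : ℕ) : Module.finrank ℝ (symSub k) = k * (k + 1) / 2 := by
  rw [(symEquiv k).finrank_eq, Module.finrank_fintype_fun_eq_card, Sym2.card, Fintype.card_fin,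
    Nat.choose_two_right, Nat.add_sub_cancel, mul_comm]

lemma finrank_symOrth {k : ℕ} {B : Matrix (Fin k) (Fin k) ℝ} (hB : B.IsSymm) (h0 : B ≠ 0) :
    Module.finrank ℝ (symOrth k B) = k * (k + 1) / 2 - 1 := by
  have hne : (trForm k B).domRestrict (symSub k) ≠ 0 := by
    intro h
    have h1 : Matrix.trace (B * B) = 0 := LinearMap.congr_fun h ⟨B, hB⟩
    have h2 := (Matrix.trace_conjTranspose_mul_self_eq_zero_iff (A := B)).1
      (by rw [hB.isHermitian_real.eq]; exact h1)
    exact h0 h2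
  have h1 :=
    Module.Dual.finrank_ker_add_one_of_ne_zero (f := (trForm k B).domRestrict (symSub k)) hne
  have h2 : symOrth k B =
      (LinearMap.ker ((trForm k B).domRestrict (symSub k))).map (symSub k).subtype := by
    ext A
    simp [symOrth, LinearMap.mem_ker, and_comm]
  have h3 := LinearEquiv.finrank_eq (Submodule.equivMapOfInjective (symSub k).subtype
    (symSub k).injective_subtype (LinearMap.ker ((trForm k B).domRestrict (symSub k))))
  rw [h2, ← h3, ← finrank_symSub, ← h1, Nat.add_sub_cancel]

lemma trace_vecMulVec_mul {k : ℕ} (B : Matrix (Fin k) (Fin k) ℝ) (x : Fin k → ℝ) :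
    Matrix.trace (Matrix.vecMulVec x x * B) = x ⬝ᵥ (B *ᵥ x) := by
  rw [Matrix.vecMulVec_mul, Matrix.trace_vecMulVec, Matrix.dotProduct_mulVec, dotProduct_comm]

lemma exists_neg_of_not_posSemidef {k : ℕ} {B : Matrix (Fin k) (Fin k) ℝ} (hB : B.IsSymm)
    (h : ¬ B.PosSemidef) : ∃ x : Fin k → ℝ, x ⬝ᵥ (B *ᵥ x) < 0 := by
  by_contra! hx
  exact h (.of_dotProduct_mulVec_nonneg hB.isHermitian_real (by simpa using hx))

lemma exists_posSemidef_trace_eq {k : ℕ} {B : Matrix (Fin k) (Fin k) ℝ} (hB : B.IsSymm)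
    (hi : Indefinite k B) (b : ℝ) :
    ∃ P : Matrix (Fin k) (Fin k) ℝ, P.PosSemidef ∧ Matrix.trace (P * B) = b := by
  -- a vector on which the form is nonzero with the sign of `b`
  have key : ∃ x : Fin k → ℝ, x ⬝ᵥ (B *ᵥ x) ≠ 0 ∧ 0 ≤ b / (x ⬝ᵥ (B *ᵥ x)) := by
    rcases le_total b 0 with hb | hb
    · obtain ⟨x, hx⟩ := exists_neg_of_not_posSemidef hB hi.1
      exact ⟨x, hx.ne, div_nonneg_of_nonpos hb hx.le⟩
    · obtain ⟨x, hx⟩ := exists_neg_of_not_posSemidef hB.neg hi.2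
      have hx' : 0 < x ⬝ᵥ (B *ᵥ x) := by simpa [Matrix.neg_mulVec] using hx
      exact ⟨x, hx'.ne', div_nonneg hb hx'.le⟩
  obtain ⟨x, hx0, hx⟩ := key
  refine ⟨(b / (x ⬝ᵥ (B *ᵥ x))) • Matrix.vecMulVec x x, ?_, ?_⟩
  · exact (by simpa using Matrix.posSemidef_vecMulVec_self_star x :
      (Matrix.vecMulVec x x).PosSemidef).smul hx
  · rw [Matrix.smul_mul, Matrix.trace_smul, trace_vecMulVec_mul, smul_eq_mul, div_mul_cancel₀ _ hx0]

lemma posSemidef_mul_self_of_isSymm {k : ℕ} {A : Matrix (Fin k) (Fin k) ℝ} (hA : A.IsSymm) :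
    (A * A).PosSemidef := by
  have h := Matrix.posSemidef_conjTranspose_mul_self A
  rwa [hA.isHermitian_real.eq] at h

lemma span_sliceOrth_of_indefinite {k : ℕ} {B : Matrix (Fin k) (Fin k) ℝ} (hB : B.IsSymm)
    (hi : Indefinite k B) : Submodule.span ℝ (sliceOrth k B) = symOrth k B := by
  apply le_antisymm
  · rw [Submodule.span_le]
    exact fun A hA => mem_symOrth.2 ⟨hA.1.isSymm_real, hA.2⟩
  intro A hA
  rw [mem_symOrth] at hA
  obtain ⟨hA, htr⟩ := hA
  have hP := (posSemidef_mul_self_of_isSymm (hA.add Matrix.isSymm_one)).smul (by norm_num : (0 : ℝ) ≤ 1 / 4)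
  have hN := (posSemidef_mul_self_of_isSymm (hA.sub Matrix.isSymm_one)).smul (by norm_num : (0 : ℝ) ≤ 1 / 4)
  set P := (1 / 4 : ℝ) • ((A + 1) * (A + 1)) with hPdef
  set N := (1 / 4 : ℝ) • ((A - 1) * (A - 1)) with hNdef
  have hPN : P - N = A := by
    have : (A + 1) * (A + 1) - (A - 1) * (A - 1) = (4 : ℝ) • A := by
      rw [show (4 : ℝ) • A = A + A + A + A by module]
      noncomm_ring
    rw [hPdef, hNdef, ← smul_sub, this, smul_smul]
    norm_num
  have htPN : Matrix.trace (P * B) = Matrix.trace (N * B) := by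
    rw [← sub_eq_zero, ← Matrix.trace_sub, ← Matrix.sub_mul, hPN, htr]
  obtain ⟨R, hR, hRt⟩ := exists_posSemidef_trace_eq hB hi (-Matrix.trace (N * B))
  have h1 : P + R ∈ sliceOrth k B :=
    ⟨hP.add hR, by rw [Matrix.add_mul, Matrix.trace_add, hRt, htPN, add_neg_cancel]⟩
  have h2 : N + R ∈ sliceOrth k B :=
    ⟨hN.add hR, by rw [Matrix.add_mul, Matrix.trace_add, hRt, add_neg_cancel]⟩
  have h3 := Submodule.sub_mem _ (Submodule.subset_span (R := ℝ) h1) (Submodule.subset_span h2)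
  rwa [add_sub_add_right_eq_sub, hPN] at h3

open scoped MatrixOrder in
lemma mul_eq_zero_of_posSemidef {k : ℕ} {A B : Matrix (Fin k) (Fin k) ℝ} (hA : A.PosSemidef)
    (hB : B.PosSemidef) (h : Matrix.trace (A * B) = 0) : A * B = 0 := by
  obtain ⟨C, rfl⟩ := CStarAlgebra.nonneg_iff_eq_star_mul_self.mp hA.nonneg
  obtain ⟨D, rfl⟩ := CStarAlgebra.nonneg_iff_eq_star_mul_self.mp hB.nonneg
  simp only [Matrix.star_eq_conjTranspose] at h ⊢
  -- with `A = CᴴC` and `B = DᴴD`, the trace of `AB` is the squared Frobenius norm of `CDᴴ`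
  have h1 : C * Dᴴ = 0 := by
    rw [← Matrix.trace_mul_conjTranspose_self_eq_zero_iff, Matrix.conjTranspose_mul,
      Matrix.conjTranspose_conjTranspose, ← h]
    rw [Matrix.mul_assoc Cᴴ, Matrix.trace_mul_comm Cᴴ]
    simp only [Matrix.mul_assoc]
  calc Cᴴ * C * (Dᴴ * D) = Cᴴ * (C * Dᴴ) * D := by simp only [Matrix.mul_assoc]
    _ = 0 := by rw [h1]; simp

/-- If `S_B` spans `symOrth k B` and `B ≠ 0`, then `B` is not psd. Otherwise `AB = 0` on that
hyperplane, so `AB` is a multiple of `B` for every symmetric `A`; testing this on `E_jj` and on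
`E_ij + E_ji` gives a contradiction. -/
lemma not_posSemidef_of_le_span {k : ℕ} (hk : 2 ≤ k) {B : Matrix (Fin k) (Fin k) ℝ} (h0 : B ≠ 0)
    (hle : symOrth k B ≤ Submodule.span ℝ (sliceOrth k B)) : ¬ B.PosSemidef := by
  intro hB
  have hann : ∀ A : Matrix (Fin k) (Fin k) ℝ, A.IsSymm → Matrix.trace (A * B) = 0 → A * B = 0 := by
    intro A hA ht
    have : Submodule.span ℝ (sliceOrth k B) ≤ LinearMap.ker (LinearMap.mulRight ℝ B) := by
      rw [Submodule.span_le]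
      intro A hA
      simpa using mul_eq_zero_of_posSemidef hA.1 hB hA.2
    simpa using this (hle (mem_symOrth.2 ⟨hA, ht⟩))
  have htr : B.trace ≠ 0 := fun h => h0 (hB.trace_eq_zero_iff.1 h)
  have hmul : ∀ A : Matrix (Fin k) (Fin k) ℝ, A.IsSymm → ∃ c : ℝ, A * B = c • B := by
    intro A hA
    refine ⟨Matrix.trace (A * B) / B.trace, ?_⟩
    have h := hann (A - (Matrix.trace (A * B) / B.trace) • 1)
      (hA.sub (Matrix.isSymm_one.smul _)) (by
        rw [Matrix.sub_mul, Matrix.trace_sub, Matrix.smul_mul, Matrix.one_mul, Matrix.trace_smul,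
          smul_eq_mul, div_mul_cancel₀ _ htr, sub_self])
    rwa [Matrix.sub_mul, Matrix.smul_mul, Matrix.one_mul, sub_eq_zero] at h
  obtain ⟨j, l, hjl⟩ : ∃ j l, B j l ≠ 0 := by
    by_contra! h
    exact h0 (by ext i j; exact h i j)
  have : Nontrivial (Fin k) := Fin.nontrivial_iff_two_le.2 hk
  obtain ⟨i, hij⟩ := exists_ne j
  obtain ⟨c, hc⟩ := hmul (Matrix.single j j 1) (by simp [Matrix.IsSymm])
  have hc1 := congrFun (congrFun hc j) l
  have hc2 := congrFun (congrFun hc i) l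
  obtain ⟨d, hd⟩ := hmul (Matrix.single i j 1 + Matrix.single j i 1)
    (by simp [Matrix.IsSymm, add_comm])
  have hd1 := congrFun (congrFun hd i) l
  simp [hjl] at hc1
  simp [hij, hc1] at hc2
  simp [Matrix.add_mul, hij, hc2.symm] at hd1
  exact hjl hd1

/-- A subspace of codimension one in `Sᵏ` is the orthogonal hyperplane of some symmetric `B ≠ 0`. -/
lemma exists_eq_symOrth {k : ℕ} (hk : 2 ≤ k) {W : Submodule ℝ (Matrix (Fin k) (Fin k) ℝ)}
    (hW : W ≤ symSub k) (hdim : Module.finrank ℝ W = k * (k + 1) / 2 - 1) :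
    ∃ B : Matrix (Fin k) (Fin k) ℝ, B.IsSymm ∧ B ≠ 0 ∧ W = symOrth k B := by
  have hpos : 0 < k * (k + 1) / 2 := Nat.div_pos (by nlinarith) (by norm_num)
  obtain ⟨A, hA, hAW⟩ : ∃ A ∈ symSub k, A ∉ W := by
    by_contra! h
    have := finrank_symSub k
    rw [le_antisymm (fun A hA => h A hA) hW, hdim] at this
    omega
  obtain ⟨f, hfA, hf⟩ := Submodule.exists_le_ker_of_notMem hAW
  -- `C` represents `f` with respect to the trace form; on `Sᵏ`, so does its symmetric part
  set C : Matrix (Fin k) (Fin k) ℝ := Matrix.of fun j i => f (Matrix.single i j 1) with hC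
  have hfC : ∀ X, f X = Matrix.trace (X * C) := by
    intro X
    conv_lhs => rw [Matrix.matrix_eq_sum_single X]
    simp only [map_sum, Matrix.trace, Matrix.diag, Matrix.mul_apply, hC, Matrix.of_apply]
    refine Finset.sum_congr rfl fun i _ => Finset.sum_congr rfl fun j _ => ?_
    rw [← smul_eq_mul, ← map_smul]
    simp
  have hfB : ∀ X : Matrix (Fin k) (Fin k) ℝ, X.IsSymm →
      Matrix.trace (X * (C + Cᵀ)) = 2 * f X := by
    intro X hX
    have : Matrix.trace (X * Cᵀ) = Matrix.trace (X * C) := by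
      rw [← Matrix.trace_transpose, Matrix.transpose_mul, Matrix.transpose_transpose, hX.eq,
        Matrix.trace_mul_comm]
    rw [Matrix.mul_add, Matrix.trace_add, this, hfC, two_mul]
  have hB : (C + Cᵀ).IsSymm := Matrix.isSymm_add_transpose_self C
  have hB0 : C + Cᵀ ≠ 0 := by
    intro h
    have := hfB A hA
    rw [h] at this
    simp at this
    exact hfA this
  refine ⟨C + Cᵀ, hB, hB0, Submodule.eq_of_le_of_finrank_eq ?_ ?_⟩
  · intro X hX
    refine mem_symOrth.2 ⟨hW hX, ?_⟩
    rw [hfB X (hW hX), LinearMap.mem_ker.1 (hf hX), mul_zero]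
  · rw [hdim, finrank_symOrth hB hB0]

/-- For `k ≥ 2`, a slice `S` of `S₊ᵏ` has codimension `1` (i.e. its linear span
has dimension `k(k+1)/2 - 1`) if and only if `S = S_B` for some indefinite
symmetric matrix `B`. -/
theorem slice_codim_one_iff_sliceOrth_indefinite (k : ℕ) (hk : 2 ≤ k)
    (L : Submodule ℝ (Matrix (Fin k) (Fin k) ℝ)) (hL : ∀ A ∈ L, A.IsSymm) :
    Module.finrank ℝ
        (Submodule.span ℝ (psdCone k ∩ (L : Set (Matrix (Fin k) (Fin k) ℝ)))) =
          k * (k + 1) / 2 - 1 ↔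
      ∃ B : Matrix (Fin k) (Fin k) ℝ, B.IsSymm ∧ Indefinite k B ∧
        psdCone k ∩ (L : Set (Matrix (Fin k) (Fin k) ℝ)) = sliceOrth k B := by
  constructor
  · intro hdim
    have hWL : Submodule.span ℝ (psdCone k ∩ (L : Set (Matrix (Fin k) (Fin k) ℝ))) ≤ L :=
      Submodule.span_le.2 Set.inter_subset_right
    obtain ⟨B, hB, hB0, hW⟩ := exists_eq_symOrth hk (fun A hA => hL A (hWL hA)) hdim
    have hS : psdCone k ∩ (L : Set (Matrix (Fin k) (Fin k) ℝ)) = sliceOrth k B := by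
      ext A
      constructor
      · intro hA
        have : A ∈ symOrth k B := hW ▸ Submodule.subset_span hA
        exact ⟨hA.1, this.2⟩
      · intro hA
        have : A ∈ symOrth k B := mem_symOrth.2 ⟨hA.1.isSymm_real, hA.2⟩
        exact ⟨hA.1, hWL (hW ▸ this)⟩
    rw [hS] at hW
    refine ⟨B, hB, ⟨not_posSemidef_of_le_span hk hB0 hW.ge, ?_⟩, hS⟩
    have h1 : sliceOrth k (-B) = sliceOrth k B := by ext A; simp [sliceOrth]
    have h2 : symOrth k (-B) = symOrth k B := by ext A; simp [mem_symOrth]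
    exact not_posSemidef_of_le_span hk (neg_ne_zero.2 hB0) (by rw [h1, h2]; exact hW.ge)
  · rintro ⟨B, hB, hi, hS⟩
    have hB0 : B ≠ 0 := by
      rintro rfl
      exact hi.1 Matrix.PosSemidef.zero
    rw [hS, span_sliceOrth_of_indefinite hB hi, finrank_symOrth hB hB0]
end
end

section
/- The set {S_B : B ∈ S₊ᵏ} is exactly the set of all faces of the cone S₊ᵏ; that is, a set F ⊆ Sᵏ is a nonempty convex extreme subset of S₊ᵏ if and only if F = S_B = {A ∈ S₊ᵏ : tr(AB) = 0} for some positive semidefinite B ∈ Sᵏ. -/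
/-!
A set `S_B` is the zero set on the psd cone of the linear functional `A ↦ tr (A B)`, which is
nonnegative there when `B` is psd; hence it is a face.

Conversely, let `F` be a face. Since a midpoint of two psd matrices has as kernel the intersection
of their kernels, a member `M` of `F` of least nullity satisfies `ker M ⊆ ker A` for all `A ∈ F`
(`exists_least_kernel`). Take for `B` the orthogonal projection onto `ker M`
(`exists_kernel_projection`). Then `A B = 0` for all `A ∈ F`, so `F ⊆ S_B`. If `A ∈ S_B`, then
`A B = 0` (`mul_eq_zero_of_trace_mul_eq_zero`), so `A` lives on the range of `M` and `A ≤ t M` for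
some `t > 0` (`exists_sub_smul_posSemidef`). Thus `M` lies in an open segment of the psd cone
starting at `A`, and `A ∈ F` by extremeness.
-/

open Matrix

noncomputable section

/-- A positive semidefinite matrix is bounded above, in the Loewner order, by a multiple of `1`. -/
lemma exists_smul_one_sub_posSemidef {k : ℕ} {A : Matrix (Fin k) (Fin k) ℝ}
    (hA : A.PosSemidef) : ∃ a : ℝ, 0 < a ∧ (a • (1 : Matrix (Fin k) (Fin k) ℝ) - A).PosSemidef := by
  set l := hA.1.eigenvalues with hl
  have hl0 : ∀ i, 0 ≤ l i := hA.eigenvalues_nonneg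
  have hsum := Finset.sum_nonneg (fun i (_ : i ∈ Finset.univ) => hl0 i)
  refine ⟨1 + ∑ i, l i, by linarith, ?_⟩
  set U : Matrix (Fin k) (Fin k) ℝ :=
    (hA.1.eigenvectorUnitary : Matrix (Fin k) (Fin k) ℝ) with hU
  have hUU : U * Uᴴ = 1 := Unitary.coe_mul_star_self hA.1.eigenvectorUnitary
  have hspec : A = U * diagonal l * Uᴴ := by
    simpa [Unitary.conjStarAlgAut_apply, star_eq_conjTranspose] using hA.1.spectral_theorem
  have hd : (diagonal (fun i => 1 + ∑ j, l j - l i)).PosSemidef := by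
    refine PosSemidef.diagonal fun i => ?_
    have := Finset.single_le_sum (fun j _ => hl0 j) (Finset.mem_univ i)
    simp only [Pi.zero_apply]
    linarith
  have h := hd.mul_mul_conjTranspose_same U
  have e : diagonal (fun i => 1 + ∑ j, l j - l i) =
      (1 + ∑ j, l j) • (1 : Matrix (Fin k) (Fin k) ℝ) - diagonal l := by
    rw [smul_one_eq_diagonal, diagonal_sub]
  rw [e, mul_sub, sub_mul, ← hspec, Matrix.mul_smul, mul_one, Matrix.smul_mul, hUU] at h
  exact h

/-- The matrix `B` is the orthogonal projection onto the kernel of `M`; the complementary projection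
`1 - B` is dominated by a multiple of `M`, since the nonzero eigenvalues of `M` are bounded below. -/
lemma exists_kernel_projection {k : ℕ} {M : Matrix (Fin k) (Fin k) ℝ} (hM : M.PosSemidef) :
    ∃ B : Matrix (Fin k) (Fin k) ℝ, B.PosSemidef ∧ M * B = 0 ∧ B * B = B ∧
      ∃ c : ℝ, 0 < c ∧ (c • M - (1 - B)).PosSemidef := by
  set l := hM.1.eigenvalues with hl
  have hl0 : ∀ i, 0 ≤ l i := hM.eigenvalues_nonneg
  set U : Matrix (Fin k) (Fin k) ℝ :=
    (hM.1.eigenvectorUnitary : Matrix (Fin k) (Fin k) ℝ) with hU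
  have hUU : U * Uᴴ = 1 := Unitary.coe_mul_star_self hM.1.eigenvectorUnitary
  have hUU' : Uᴴ * U = 1 := Unitary.coe_star_mul_self hM.1.eigenvectorUnitary
  have hspec : M = U * diagonal l * Uᴴ := by
    simpa [Unitary.conjStarAlgAut_apply, star_eq_conjTranspose] using hM.1.spectral_theorem
  -- `b` is the indicator of the zero eigenvalues
  set b : Fin k → ℝ := fun i => if l i = 0 then 1 else 0 with hb
  have hmul : ∀ d e : Fin k → ℝ, (U * diagonal d * Uᴴ) * (U * diagonal e * Uᴴ) =
      U * diagonal (fun i => d i * e i) * Uᴴ := by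
    intro d e
    calc _ = U * diagonal d * (Uᴴ * U) * diagonal e * Uᴴ := by simp only [mul_assoc]
      _ = _ := by rw [hUU', mul_one, mul_assoc U, diagonal_mul_diagonal]
  refine ⟨U * diagonal b * Uᴴ, ?_, ?_, ?_, 1 + ∑ i, (l i)⁻¹, ?_, ?_⟩
  · refine (PosSemidef.diagonal fun i => ?_).mul_mul_conjTranspose_same U
    simp only [hb, Pi.zero_apply]
    split_ifs <;> norm_num
  · rw [hspec, hmul]
    have : (fun i => l i * b i) = 0 := by
      funext i
      by_cases h : l i = 0 <;> simp [hb, h]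
    rw [this]
    simp
  · rw [hmul]
    congr 3
    funext i
    by_cases h : l i = 0 <;> simp [hb, h]
  · have := Finset.sum_nonneg (fun i (_ : i ∈ Finset.univ) => inv_nonneg.2 (hl0 i))
    linarith
  · have hd : (diagonal (fun i => (1 + ∑ j, (l j)⁻¹) * l i - (1 - b i))).PosSemidef := by
      refine PosSemidef.diagonal fun i => ?_
      simp only [Pi.zero_apply]
      by_cases h : l i = 0
      · simp [hb, h]
      · have h1 := Finset.single_le_sum (fun j _ => inv_nonneg.2 (hl0 j)) (Finset.mem_univ i)
        have h2 := mul_le_mul_of_nonneg_right h1 (hl0 i)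
        rw [inv_mul_cancel₀ h] at h2
        have := hl0 i
        simp only [hb, h, if_false]
        linarith
    have h := hd.mul_mul_conjTranspose_same U
    have e : diagonal (fun i => (1 + ∑ j, (l j)⁻¹) * l i - (1 - b i)) =
        (1 + ∑ j, (l j)⁻¹) • diagonal l - ((1 : Matrix (Fin k) (Fin k) ℝ) - diagonal b) := by
      rw [← diagonal_one, diagonal_sub, ← diagonal_smul, diagonal_sub]
      rfl
    rw [e, mul_sub, sub_mul, Matrix.mul_smul, Matrix.smul_mul, ← hspec, mul_sub U, sub_mul, mul_one, hUU] at h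
    exact h

lemma trace_mul_nonneg_of_posSemidef {k : ℕ} {A B : Matrix (Fin k) (Fin k) ℝ}
    (hA : A.PosSemidef) (hB : B.PosSemidef) : 0 ≤ (A * B).trace := by
  open scoped MatrixOrder in
  obtain ⟨C, rfl⟩ := CStarAlgebra.nonneg_iff_eq_star_mul_self.mp hB.nonneg
  rw [← mul_assoc, trace_mul_comm, ← mul_assoc]
  exact (hA.mul_mul_conjTranspose_same C).trace_nonneg

/-- If `B` is a symmetric idempotent, then `tr (A B) = tr (B A B)`, so its vanishing forces
`B A B = 0` and hence `A B = 0`. -/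
lemma mul_eq_zero_of_trace_mul_eq_zero {k : ℕ} {A B : Matrix (Fin k) (Fin k) ℝ}
    (hA : A.PosSemidef) (hB : B.IsHermitian) (hBB : B * B = B) (h : (A * B).trace = 0) :
    A * B = 0 := by
  have hBAB : B * A * B = 0 := by
    have hp := hA.conjTranspose_mul_mul_same B
    rw [hB.eq] at hp
    rw [← hp.trace_eq_zero_iff, mul_assoc, trace_mul_comm, mul_assoc, hBB, h]
  refine ext_of_mulVec_single fun i => ?_
  rw [← mulVec_mulVec, zero_mulVec, ← hA.dotProduct_mulVec_zero_iff, star_mulVec, hB.eq,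
    ← dotProduct_mulVec, mulVec_mulVec, mulVec_mulVec, hBAB]
  simp

/-- A psd matrix `A` annihilated by the projection `B` satisfies, in the Loewner order,
`A = (1 - B) A (1 - B) ≤ a (1 - B) ≤ a c M`, where `A ≤ a 1`. -/
lemma exists_sub_smul_posSemidef {k : ℕ} {A B M : Matrix (Fin k) (Fin k) ℝ} {c : ℝ}
    (hA : A.PosSemidef) (hB : B.IsHermitian) (hBB : B * B = B) (hAB : A * B = 0) (hc : 0 < c)
    (hcM : (c • M - (1 - B)).PosSemidef) :
    ∃ t : ℝ, 0 < t ∧ (t • M - A).PosSemidef := by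
  obtain ⟨a, ha, haA⟩ := exists_smul_one_sub_posSemidef hA
  have hBA : B * A = 0 := by
    have := congrArg conjTranspose hAB
    rwa [conjTranspose_mul, hA.1.eq, hB.eq, conjTranspose_zero] at this
  refine ⟨a * c, mul_pos ha hc, ?_⟩
  have h1 := haA.conjTranspose_mul_mul_same (1 - B)
  have h2 := (hcM.smul ha.le).add h1
  convert h2 using 1
  rw [conjTranspose_sub, conjTranspose_one, hB.eq]
  simp only [mul_sub, sub_mul, mul_one, one_mul, Matrix.mul_smul, Matrix.smul_mul, hBA, hAB, hBB, smul_sub,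
    smul_smul, zero_mul]
  abel

/-- A convex set of positive semidefinite matrices has a member whose kernel lies in the kernel of
every other member: passing to a midpoint intersects kernels, so one of least nullity will do. -/
lemma exists_least_kernel {k : ℕ} {F : Set (Matrix (Fin k) (Fin k) ℝ)} (hne : F.Nonempty)
    (hconv : Convex ℝ F) (hF : ∀ A ∈ F, A.PosSemidef) :
    ∃ M ∈ F, ∀ A ∈ F, ∀ x, M *ᵥ x = 0 → A *ᵥ x = 0 := by
  let d : Matrix (Fin k) (Fin k) ℝ → ℕ := fun A => Module.finrank ℝ (LinearMap.ker A.mulVecLin)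
  obtain ⟨M, hMF, hmin⟩ := (InvImage.wf d wellFounded_lt).has_min F hne
  refine ⟨M, hMF, fun A hAF x hx => ?_⟩
  have hC := hconv hMF hAF (a := 1 / 2) (b := 1 / 2) (by norm_num) (by norm_num) (by norm_num)
  set C := (1 / 2 : ℝ) • M + (1 / 2 : ℝ) • A with hCdef
  have hker : ∀ y, C *ᵥ y = 0 → M *ᵥ y = 0 ∧ A *ᵥ y = 0 := by
    intro y hy
    have h0 : star y ⬝ᵥ (C *ᵥ y) = 0 := by rw [hy, dotProduct_zero]
    have h1 := (hF M hMF).dotProduct_mulVec_nonneg y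
    have h2 := (hF A hAF).dotProduct_mulVec_nonneg y
    rw [hCdef, add_mulVec, dotProduct_add, smul_mulVec, smul_mulVec, dotProduct_smul,
      dotProduct_smul, smul_eq_mul, smul_eq_mul] at h0
    rw [← (hF M hMF).dotProduct_mulVec_zero_iff, ← (hF A hAF).dotProduct_mulVec_zero_iff]
    constructor <;> linarith
  have hle : LinearMap.ker C.mulVecLin ≤ LinearMap.ker M.mulVecLin := by
    intro y hy
    simp only [LinearMap.mem_ker, mulVecLin_apply] at hy ⊢
    exact (hker y hy).1
  have heq := Submodule.eq_of_le_of_finrank_le hle (not_lt.mp (hmin C hC))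
  have hxC : x ∈ LinearMap.ker C.mulVecLin := by
    rw [heq]
    simpa using hx
  exact (hker x (by simpa using hxC)).2

/-- The faces of `S₊ᵏ` (nonempty convex extreme subsets) are exactly the sets
`S_B` for `B` positive semidefinite. -/
theorem faces_psdCone_eq_sliceOrth (k : ℕ) (F : Set (Matrix (Fin k) (Fin k) ℝ)) :
    (F.Nonempty ∧ Convex ℝ F ∧ IsExtreme ℝ (psdCone k) F) ↔
      ∃ B : Matrix (Fin k) (Fin k) ℝ, B.PosSemidef ∧ F = sliceOrth k B := by
  constructor
  · rintro ⟨hne, hconv, hext⟩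
    obtain ⟨M, hMF, hM⟩ := exists_least_kernel hne hconv hext.subset
    have hMpsd : M.PosSemidef := hext.subset hMF
    obtain ⟨B, hB, hMB, hBB, c, hc, hcM⟩ := exists_kernel_projection hMpsd
    refine ⟨B, hB, Set.Subset.antisymm (fun A hA => ⟨hext.subset hA, ?_⟩) ?_⟩
    · have hAB : A * B = 0 := by
        refine ext_of_mulVec_single fun i => ?_
        rw [← mulVec_mulVec, zero_mulVec]
        apply hM A hA
        rw [mulVec_mulVec, hMB, zero_mulVec]
      rw [hAB, trace_zero]
    · rintro A ⟨hA, htr⟩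
      obtain ⟨t, ht, htA⟩ := exists_sub_smul_posSemidef hA hB.1 hBB
        (mul_eq_zero_of_trace_mul_eq_zero hA hB.1 hBB htr) hc hcM
      -- `M = s A + (1 - s) Y` with `s = 1 / (1 + t)` and `Y = t⁻¹ ((1 + t) M - A)`, which is psd
      have hY : (t⁻¹ • ((t • M - A) + M)).PosSemidef :=
        (htA.add hMpsd).smul (inv_nonneg.2 ht.le)
      refine hext.left_mem_of_mem_openSegment hA hY hMF
        ⟨1 / (1 + t), t / (1 + t), by positivity, by positivity, by field_simp, ?_⟩
      ext i j
      simp only [Matrix.add_apply, Matrix.smul_apply, Matrix.sub_apply, smul_eq_mul]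
      field_simp
      ring
  · rintro ⟨B, hB, rfl⟩
    refine ⟨⟨0, PosSemidef.zero, by simp⟩, ?_, fun A hA => hA.1, ?_⟩
    · rintro A ⟨hA, hA0⟩ C ⟨hC, hC0⟩ a b ha hb -
      refine ⟨(hA.smul ha).add (hC.smul hb), ?_⟩
      simp [add_mul, hA0, hC0]
    · rintro A hA C hC _ ⟨-, hD⟩ ⟨a, b, ha, hb, -, rfl⟩
      refine ⟨hA, ?_⟩
      have h1 := trace_mul_nonneg_of_posSemidef hA hB
      have h2 := trace_mul_nonneg_of_posSemidef hC hB
      rw [add_mul, Matrix.smul_mul, Matrix.smul_mul, trace_add, trace_smul, trace_smul, smul_eq_mul,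
        smul_eq_mul] at hD
      have h3 := mul_nonneg hb.le h2
      have h4 := mul_nonneg ha.le h1
      have h5 : a * (A * B).trace = 0 := by linarith
      exact (mul_eq_zero.1 h5).resolve_left ha.ne'
end
end

section
/- A real symmetric 3×3 matrix B is singular and indefinite if and only if det(B) = 0 and det(B_{{1,2}}) + det(B_{{1,3}}) + det(B_{{2,3}}) < 0, where det(B_I) denotes the 2×2 principal minor of B with rows and columns indexed by I. -/
/-!
Write `e₂(B)` for the sum of the `2 × 2` principal minors; it is the second elementary symmetric
function of the eigenvalues and is unchanged under `B ↦ -B`. If `±B` is positive semidefinite, its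
principal minors are nonnegative, so `e₂(B) ≥ 0` (`minorSum_nonneg_of_posSemidef`).
Conversely, if `det B = 0`, one eigenvalue vanishes and `e₂(B)` is the product of the other two;
when `e₂(B) ≥ 0` these have the same sign, which is that of the trace, so `B` or `-B` is positive
semidefinite (`posSemidef_of_minorSum_nonneg`).
-/

open Matrix

noncomputable section

/-- The sum of the three `2 × 2` principal minors of a `3 × 3` matrix. -/
def minorSum (B : Matrix (Fin 3) (Fin 3) ℝ) : ℝ :=
  (B.submatrix ![0, 1] ![0, 1]).det + (B.submatrix ![0, 2] ![0, 2]).det +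
    (B.submatrix ![1, 2] ![1, 2]).det

lemma minorSum_neg (B : Matrix (Fin 3) (Fin 3) ℝ) : minorSum (-B) = minorSum B := by
  simp only [minorSum, det_fin_two, submatrix_apply]
  simp

lemma minorSum_nonneg_of_posSemidef {B : Matrix (Fin 3) (Fin 3) ℝ} (hB : B.PosSemidef) :
    0 ≤ minorSum B :=
  add_nonneg (add_nonneg (hB.submatrix _).det_nonneg (hB.submatrix _).det_nonneg)
    (hB.submatrix _).det_nonneg

/-- The sum of principal minors is the second elementary symmetric function of the eigenvalues:
compare `det (1 - B)` with `∏ (1 - λᵢ)`, the trace and the determinant being known. -/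
lemma minorSum_eq_eigenvalues {B : Matrix (Fin 3) (Fin 3) ℝ} (hB : B.IsHermitian) :
    minorSum B = hB.eigenvalues 0 * hB.eigenvalues 1 + hB.eigenvalues 0 * hB.eigenvalues 2 +
      hB.eigenvalues 1 * hB.eigenvalues 2 := by
  have hdet := hB.det_eq_prod_eigenvalues
  have htrace := hB.trace_eq_sum_eigenvalues
  have hchar := congrArg (Polynomial.eval 1) hB.charpoly_eq
  rw [Matrix.eval_charpoly] at hchar
  simp [Fin.prod_univ_three, Fin.sum_univ_three, det_fin_three, trace_fin_three]
    at hdet htrace hchar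
  simp only [minorSum, det_fin_two, submatrix_apply]
  simp
  linear_combination hchar + hdet + htrace

lemma posSemidef_of_minorSum_nonneg {B : Matrix (Fin 3) (Fin 3) ℝ} (hB : B.IsHermitian)
    (hdet : B.det = 0) (hminor : 0 ≤ minorSum B) (htrace : 0 ≤ B.trace) : B.PosSemidef := by
  rw [hB.posSemidef_iff_eigenvalues_nonneg]
  rw [minorSum_eq_eigenvalues hB] at hminor
  rw [hB.det_eq_prod_eigenvalues] at hdet
  rw [hB.trace_eq_sum_eigenvalues] at htrace
  simp only [Fin.prod_univ_three, Fin.sum_univ_three, RCLike.ofReal_real_eq_id, id_eq,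
    mul_eq_zero] at hdet htrace
  -- Two reals with nonnegative sum and nonnegative product are both nonnegative.
  have key : ∀ x y : ℝ, 0 ≤ x + y → 0 ≤ x * y → 0 ≤ x ∧ 0 ≤ y := by
    intro x y hs hp
    constructor <;> by_contra! h <;> nlinarith
  have hall : 0 ≤ hB.eigenvalues 0 ∧ 0 ≤ hB.eigenvalues 1 ∧ 0 ≤ hB.eigenvalues 2 := by
    rcases hdet with (h | h) | h <;> rw [h] at hminor htrace ⊢
    · have := key (hB.eigenvalues 1) (hB.eigenvalues 2) (by linarith) (by linarith)
      exact ⟨le_rfl, this⟩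
    · have := key (hB.eigenvalues 0) (hB.eigenvalues 2) (by linarith) (by linarith)
      exact ⟨this.1, le_rfl, this.2⟩
    · have := key (hB.eigenvalues 0) (hB.eigenvalues 1) (by linarith) (by linarith)
      exact ⟨this.1, this.2, le_rfl⟩
  intro i
  fin_cases i
  exacts [hall.1, hall.2.1, hall.2.2]

/-- A symmetric `3 × 3` matrix `B` is singular and indefinite iff `det B = 0`
and the sum of its three `2 × 2` principal minors is negative. -/
theorem singular_indefinite_iff_minors (B : Matrix (Fin 3) (Fin 3) ℝ)
    (hB : B.IsSymm) :
    (B.det = 0 ∧ Indefinite 3 B) ↔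
      (B.det = 0 ∧
        (B.submatrix ![0, 1] ![0, 1]).det + (B.submatrix ![0, 2] ![0, 2]).det +
          (B.submatrix ![1, 2] ![1, 2]).det < 0) := by
  change _ ↔ (B.det = 0 ∧ minorSum B < 0)
  refine and_congr_right fun hdet => ⟨fun hind => ?_, fun hneg => ⟨fun hpos => ?_, fun hpos => ?_⟩⟩
  · have hherm : B.IsHermitian := by
      rw [IsHermitian, conjTranspose_eq_transpose_of_trivial]
      exact hB
    by_contra! hminor
    rcases le_total 0 B.trace with htrace | htrace
    · exact hind.1 (posSemidef_of_minorSum_nonneg hherm hdet hminor htrace)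
    · refine hind.2 (posSemidef_of_minorSum_nonneg hherm.neg ?_ ?_ ?_)
      · rw [det_neg, hdet, mul_zero]
      · rwa [minorSum_neg]
      · rw [trace_neg]
        exact neg_nonneg.mpr htrace
  · exact absurd (minorSum_nonneg_of_posSemidef hpos) hneg.not_ge
  · have := minorSum_nonneg_of_posSemidef hpos
    rw [minorSum_neg] at this
    exact absurd this hneg.not_ge
end
end

section
/- Let W be a linear subspace of the space S³ of real symmetric 3×3 matrices with dim(W) ≥ 2, and suppose every nonzero element of W is indefinite. Then W contains a nonzero singular matrix, i.e., there exists B ∈ W with B ≠ 0 and det(B) = 0. -/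
/-!
The determinant of a `3 × 3` matrix is odd: `det (-A) = -det A`. Since `dim W ≥ 2`, any nonzero `A ∈ W`
can be joined to `-A` by a path in `W` avoiding `0`, and the intermediate value theorem gives a
zero of the determinant on that path.
-/

open Matrix

noncomputable section

/-- If `W` is a linear subspace of `S³` of dimension at least `2` all of whose
nonzero elements are indefinite, then `W` contains a nonzero singular matrix. -/
theorem exists_singular_of_indefinite_subspace
    (W : Submodule ℝ (Matrix (Fin 3) (Fin 3) ℝ)) (hsymm : ∀ A ∈ W, A.IsSymm)
    (hdim : 2 ≤ Module.finrank ℝ W)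
    (hind : ∀ B ∈ W, B ≠ 0 → Indefinite 3 B) :
    ∃ B ∈ W, B ≠ 0 ∧ B.det = 0 := by
  obtain ⟨f, hf⟩ := exists_linearIndependent_of_le_finrank hdim
  -- The half circle from `f 0` to `-f 0` in the plane spanned by the independent `f 0`, `f 1`.
  let γ : ℝ → W := fun t => Real.cos t • f 0 + Real.sin t • f 1
  have hcont : Continuous fun t => (γ t : Matrix (Fin 3) (Fin 3) ℝ).det := by
    refine Continuous.matrix_det ?_
    simp only [γ, Submodule.coe_add, Submodule.coe_smul]
    fun_prop
  have hne : ∀ t, γ t ≠ 0 := by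
    intro t ht
    have hlin := LinearIndependent.pair_iff.1
      (show LinearIndependent ℝ ![f 0, f 1] by convert hf using 1; ext i; fin_cases i <;> rfl)
      _ _ ht
    have := Real.sin_sq_add_cos_sq t
    rw [hlin.1, hlin.2] at this
    norm_num at this
  have hπ : (γ Real.pi : Matrix (Fin 3) (Fin 3) ℝ).det
      = -(γ 0 : Matrix (Fin 3) (Fin 3) ℝ).det := by
    simp [γ, Matrix.det_neg]
    ring
  have hzero : ∃ t, (γ t : Matrix (Fin 3) (Fin 3) ℝ).det = 0 := by
    rcases le_total (γ 0 : Matrix (Fin 3) (Fin 3) ℝ).det 0 with h | h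
    · exact mem_range_of_exists_le_of_exists_ge hcont ⟨0, h⟩ ⟨Real.pi, by rw [hπ]; linarith⟩
    · exact mem_range_of_exists_le_of_exists_ge hcont ⟨Real.pi, by rw [hπ]; linarith⟩ ⟨0, h⟩
  obtain ⟨t, ht⟩ := hzero
  exact ⟨γ t, (γ t).2, fun h => hne t (Subtype.ext h), ht⟩
end
end
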